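/- Let d ≥ 2 and let K : ℝ^d → ℝ be continuous, isotropic, positive definite, whose radial profile is regularly varying (at infinity) with index α ∈ [0,1]; in the case α = 1 assume moreover K(x) ∼ x^{−1}(log x)^{−γ} as x → ∞ for some γ < 1; assume also that sup_{y ≥ x ≥ r} K(y)/K(x) − 1 → 0 as r → ∞. Let r(R) → ∞ and s(R) → ∞ be functions with s(R) ≤ r(R) ≤ R and, as R → ∞: if α ∈ [0,1), r(R) = o(R) and r(R)K(s(R)) = o(R K(R)); if α = 1, r(R) = R^{o(1)} and r(R)K(s(R))(log s(R)) = o(R K(R)(log R)). Then for every ε > 0 there exists ρ₀ ∈ (0,1) such that for every ρ ∈ (ρ₀, 1), liminf_{R → ∞} inf Cap_K(∪_i D_i) / Cap_K([0,R] × {0}^{d−1}) ≥ 1 − ε, where the infimum is over all finite collections {D_i}_{1 ≤ i ≤ n} of translated copies of the ball B(s(R)) with n ≥ ⌊ρ R / r(R)⌋ whose centres {c_i}_{1 ≤ i ≤ n} satisfy |c_i − c_j| ≥ |i−j| r(R) for all i, j. -/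

import Mathlib

open Filter MeasureTheory Asymptotics

/-- A function `L` is slowly varying (at infinity) if it is continuous and strictly positive
on `(0,∞)` and `L(ax)/L(x) → 1` as `x → ∞` for every `a > 0`. -/
def SlowlyVarying (L : ℝ → ℝ) : Prop :=
  ContinuousOn L (Set.Ioi 0) ∧ (∀ x : ℝ, 0 < x → 0 < L x) ∧
    ∀ a : ℝ, 0 < a → Tendsto (fun x => L (a * x) / L x) atTop (nhds 1)

/-- A continuous function `h` on `(0,∞)` is regularly varying (at infinity) with index `α`
if `h(x) ∼ x^(-α) L(x)` as `x → ∞` for some slowly varying `L`. -/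
def RegularlyVarying (h : ℝ → ℝ) (α : ℝ) : Prop :=
  ContinuousOn h (Set.Ioi 0) ∧
    ∃ L : ℝ → ℝ, SlowlyVarying L ∧
      Tendsto (fun x => h x / (x ^ (-α) * L x)) atTop (nhds 1)

/-- A kernel `K : ℝ^d → ℝ` is positive definite if all quadratic forms
`∑ i j, c i * c j * K (x i - x j)` are nonnegative. -/
def IsPosDefKernel {d : ℕ} (K : EuclideanSpace ℝ (Fin d) → ℝ) : Prop :=
  ∀ (n : ℕ) (x : Fin n → EuclideanSpace ℝ (Fin d)) (c : Fin n → ℝ),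
    0 ≤ ∑ i : Fin n, ∑ j : Fin n, c i * c j * K (x i - x j)

/-- The energy `E_K(μ) = ∫∫ K(x-y) dμ(x) dμ(y)`. -/
noncomputable def energyE {d : ℕ} (K : EuclideanSpace ℝ (Fin d) → ℝ)
    (μ : Measure (EuclideanSpace ℝ (Fin d))) : ℝ :=
  ∫ x, ∫ y, K (x - y) ∂μ ∂μ

/-- The capacity of `D` with respect to `K`: the reciprocal of the minimal energy of a
Borel probability measure supported on `D`. -/
noncomputable def capacityE {d : ℕ} (K : EuclideanSpace ℝ (Fin d) → ℝ)
    (D : Set (EuclideanSpace ℝ (Fin d))) : ℝ :=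
  (sInf {e : ℝ | ∃ μ : Measure (EuclideanSpace ℝ (Fin d)),
      IsProbabilityMeasure μ ∧ μ Dᶜ = 0 ∧ e = energyE K μ})⁻¹

/-- Embedding of a subset of `ℝ` into `ℝ^d` as `S × {0}^{d-1}`. -/
def lineEmbed (d : ℕ) (S : Set ℝ) : Set (EuclideanSpace ℝ (Fin d)) :=
  {x | ∀ i : Fin d, if (i : ℕ) = 0 then x i ∈ S else x i = 0}

/-! A continuous positive definite `K` is the Gram kernel of a bounded continuous feature map `φ`
into a Hilbert space, so the energy of `μ` is `‖∫ φ ∂μ‖²`. Take a near-optimal measure on `[0, R]`,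
convolve it with the uniform measure on a short interval, which does not increase the energy, and
transplant the mass at `t` onto a radius of the ball of index `⌊l t / r⌋`, for some `l < ρ` close to
`1`. Points at distance `τ ≫ r` are sent to points at distance at least about `l τ`, where regular
variation makes `K` larger than at `τ` by at most a factor close to `1`. The remaining near pairs
contribute about `(r / R) J(s) / s`, with `J(x) = ∫₀ˣ |K|`. This is negligible against the energy
`≍ J(R) / R` of `[0, R]`: by Karamata's theorem, or by direct integration when `α = 1`, the
hypotheses on `r` and `s` say that `(r / s) J(s) = o(J(R))`. -/

open scoped InnerProductSpace

section FeatureMap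

variable {E H : Type*} [NormedAddCommGroup E] [NormedAddCommGroup H] [InnerProductSpace ℝ H]

/-- A feature map of the radial kernel `(x, y) ↦ k ‖x - y‖`: a continuous map into a Hilbert space
whose Gram matrix is the kernel. Energies of measures become squared norms of mean vectors. -/
structure IsRadialFeatureMap (φ : E → H) (k : ℝ → ℝ) : Prop where
  continuous : Continuous φ
  inner_eq (x y : E) : ⟪φ x, φ y⟫_ℝ = k ‖x - y‖

theorem IsPosDefKernel.sum_nonneg {d : ℕ} {K : EuclideanSpace ℝ (Fin d) → ℝ}
    (hK : IsPosDefKernel K) (t : Finset (EuclideanSpace ℝ (Fin d)))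
    (c : EuclideanSpace ℝ (Fin d) → ℝ) :
    0 ≤ ∑ x ∈ t, ∑ y ∈ t, c x * c y * K (x - y) := by
  have reindex (f : EuclideanSpace ℝ (Fin d) → ℝ) :
      ∑ i, f (t.equivFin.symm i) = ∑ x ∈ t, f x := by
    rw [Equiv.sum_comp t.equivFin.symm (fun x => f x), Finset.sum_coe_sort]
  have h := hK t.card (fun i => t.equivFin.symm i) (fun i => c (t.equivFin.symm i))
  rwa [reindex (fun x => ∑ j, c x * c (t.equivFin.symm j) * K (x - t.equivFin.symm j)),
    Finset.sum_congr rfl fun x _ => reindex fun y => c x * c y * K (x - y)] at h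

theorem IsPosDefKernel.exists_inner_eq {d : ℕ} {K : EuclideanSpace ℝ (Fin d) → ℝ}
    (hK : IsPosDefKernel K) (hsymm : ∀ x, K (-x) = K x) :
    ∃ (H : Type) (_ : NormedAddCommGroup H) (_ : InnerProductSpace ℝ H) (_ : CompleteSpace H)
      (φ : EuclideanSpace ℝ (Fin d) → H), ∀ x y, ⟪φ x, φ y⟫_ℝ = K (x - y) := by
  let M : Matrix (EuclideanSpace ℝ (Fin d)) (EuclideanSpace ℝ (Fin d)) (ℝ →L[ℝ] ℝ) :=
    .of fun x y => K (x - y) • 1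
  have hM : M.PosSemidef := by
    have criterion := (RKHS.posSemidef_tfae (K := M)).out 0 2
    refine criterion.2 ⟨?_, fun v => ?_⟩
    · ext x y
      simp [M, ← hsymm (x - y)]
    · refine (hK.sum_nonneg v.support v).trans_eq ?_
      simp only [Finsupp.sum, M]
      refine Finset.sum_congr rfl fun x _ => Finset.sum_congr rfl fun y _ => ?_
      simp [← hsymm (x - y)]
      ring
  have : Fact M.PosSemidef := ⟨hM⟩
  refine ⟨RKHS.OfKernel M, inferInstance, inferInstance, inferInstance,
    fun x => RKHS.kerFun (RKHS.OfKernel M) x (1 : ℝ), fun x y => ?_⟩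
  rw [← RKHS.kernel_inner, RKHS.OfKernel.kernel_ofKernel]
  simp [M, ← hsymm (x - y)]

theorem inner_integral_le_of_ae_le {Ω : Type*} [MeasurableSpace Ω] {μ : Measure Ω} [CompleteSpace H]
    {f g : Ω → H} {A : Ω → ℝ} {x y : H} {c : ℝ} (hf : Integrable f μ) (hg : Integrable g μ)
    (hA : Integrable A μ) (h : ∀ᵐ u ∂μ, ⟪x, f u⟫_ℝ ≤ c * ⟪y, g u⟫_ℝ + A u) :
    ⟪x, ∫ u, f u ∂μ⟫_ℝ ≤ c * ⟪y, ∫ u, g u ∂μ⟫_ℝ + ∫ u, A u ∂μ := by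
  have hgy := (hg.const_inner y).const_mul c
  rw [← integral_inner hf, ← integral_inner hg, ← integral_const_mul, ← integral_add hgy hA]
  exact integral_mono_ae (hf.const_inner x) (hgy.add hA) h

section ProbabilityMean

variable {Ω : Type*} [MeasurableSpace Ω] {μ : Measure Ω} [IsProbabilityMeasure μ] [CompleteSpace H]
  {f g : Ω → H} {C : ℝ}

theorem inner_integral_le_of_ae_le_const {x : H} (hf : Integrable f μ)
    (h : ∀ᵐ u ∂μ, ⟪x, f u⟫_ℝ ≤ C) : ⟪x, ∫ u, f u ∂μ⟫_ℝ ≤ C := by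
  simpa using inner_integral_le_of_ae_le (c := 0) (y := (0 : H)) hf (integrable_zero Ω H μ)
    (integrable_const C) (by simpa using h)

theorem norm_sq_integral_le_of_ae_inner_le {c : ℝ} (hf : Integrable f μ) (hg : Integrable g μ)
    (h : ∀ᵐ t ∂μ, ⟪f t, ∫ u, f u ∂μ⟫_ℝ ≤ c * ⟪g t, ∫ u, g u ∂μ⟫_ℝ + C) :
    ‖∫ u, f u ∂μ‖ ^ 2 ≤ c * ‖∫ u, g u ∂μ‖ ^ 2 + C := by
  rw [← real_inner_self_eq_norm_sq, ← real_inner_self_eq_norm_sq]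
  simpa using inner_integral_le_of_ae_le (x := ∫ u, f u ∂μ) (y := ∫ u, g u ∂μ) hf hg
    (integrable_const C) (by simpa only [real_inner_comm] using h)

end ProbabilityMean

namespace IsRadialFeatureMap

variable {φ : E → H} {k : ℝ → ℝ}

theorem norm_sq_eq (hφ : IsRadialFeatureMap φ k) (x : E) : ‖φ x‖ ^ 2 = k 0 := by
  rw [← real_inner_self_eq_norm_sq, hφ.inner_eq, sub_self, norm_zero]

theorem profile_zero_nonneg (hφ : IsRadialFeatureMap φ k) : 0 ≤ k 0 :=
  hφ.norm_sq_eq 0 ▸ sq_nonneg _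

theorem abs_profile_le (hφ : IsRadialFeatureMap φ k) (x y : E) : |k ‖x - y‖| ≤ k 0 := by
  have norm_eq (z : E) : ‖φ z‖ = √(k 0) := by rw [← hφ.norm_sq_eq z, Real.sqrt_sq (norm_nonneg _)]
  calc |k ‖x - y‖| = |⟪φ x, φ y⟫_ℝ| := by rw [hφ.inner_eq]
    _ ≤ ‖φ x‖ * ‖φ y‖ := abs_real_inner_le_norm _ _
    _ = k 0 := by rw [norm_eq, norm_eq, Real.mul_self_sqrt hφ.profile_zero_nonneg]

theorem abs_profile_abs_le {ψ : ℝ → H} (hψ : IsRadialFeatureMap ψ k) (t : ℝ) : |k (|t|)| ≤ k 0 := by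
  simpa using hψ.abs_profile_le t 0

theorem continuous_profile_abs {ψ : ℝ → H} (hψ : IsRadialFeatureMap ψ k) :
    Continuous fun t => k |t| := by
  simpa [hψ.inner_eq] using hψ.continuous.inner (𝕜 := ℝ) (continuous_const (y := ψ 0))

theorem comp_line [NormedSpace ℝ E] (hφ : IsRadialFeatureMap φ k) (a : E) {e : E} (he : ‖e‖ = 1) :
    IsRadialFeatureMap (fun t : ℝ => φ (a + t • e)) k where
  continuous := hφ.continuous.comp (by fun_prop)
  inner_eq t u := by
    rw [hφ.inner_eq, add_sub_add_left_eq_sub, ← sub_smul, norm_smul, he, mul_one]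

theorem comp_smul [NormedSpace ℝ E] (hφ : IsRadialFeatureMap φ k) {e : E} (he : ‖e‖ = 1) :
    IsRadialFeatureMap (fun t : ℝ => φ (t • e)) k := by
  simpa using hφ.comp_line 0 he

variable [MeasurableSpace E] [BorelSpace E] [SecondCountableTopology E]

theorem integrable_comp (hφ : IsRadialFeatureMap φ k) {Ω : Type*} [MeasurableSpace Ω]
    {μ : Measure Ω} [IsFiniteMeasure μ] {f : Ω → E} (hf : Measurable f) :
    Integrable (fun u => φ (f u)) μ := by
  refine .of_bound (hφ.continuous.comp_aestronglyMeasurable hf.aestronglyMeasurable) (√(k 0))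
    (.of_forall fun u => ?_)
  rw [← hφ.norm_sq_eq (f u), Real.sqrt_sq (norm_nonneg _)]

theorem integrable (hφ : IsRadialFeatureMap φ k) {μ : Measure E} [IsFiniteMeasure μ] :
    Integrable φ μ :=
  hφ.integrable_comp measurable_id

theorem inner_integral_eq [CompleteSpace H] (hφ : IsRadialFeatureMap φ k) (x : E) (μ : Measure E)
    [IsFiniteMeasure μ] : ⟪φ x, ∫ y, φ y ∂μ⟫_ℝ = ∫ y, k ‖x - y‖ ∂μ := by
  simp only [← integral_inner hφ.integrable, hφ.inner_eq]

theorem norm_sq_integral_eq [CompleteSpace H] (hφ : IsRadialFeatureMap φ k) (μ : Measure E)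
    [IsFiniteMeasure μ] : ‖∫ x, φ x ∂μ‖ ^ 2 = ∫ x, ∫ y, k ‖x - y‖ ∂μ ∂μ := by
  rw [← real_inner_self_eq_norm_sq, ← integral_inner hφ.integrable]
  simp only [real_inner_comm, hφ.inner_integral_eq]

end IsRadialFeatureMap

theorem IsPosDefKernel.exists_isRadialFeatureMap {d : ℕ} {K : EuclideanSpace ℝ (Fin d) → ℝ}
    {k : ℝ → ℝ} (hK : IsPosDefKernel K) (hcont : Continuous K) (hrad : ∀ x, K x = k ‖x‖) :
    ∃ (H : Type) (_ : NormedAddCommGroup H) (_ : InnerProductSpace ℝ H) (_ : CompleteSpace H)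
      (φ : EuclideanSpace ℝ (Fin d) → H), IsRadialFeatureMap φ k := by
  obtain ⟨H, _, _, _, φ, hφ⟩ := hK.exists_inner_eq fun x => by rw [hrad, hrad, norm_neg]
  refine ⟨H, inferInstance, inferInstance, inferInstance, φ, ?_, fun x y => by rw [hφ, hrad]⟩
  have norm_sub_sq x y : ‖φ x - φ y‖ ^ 2 = 2 * (K 0 - K (x - y)) := by
    rw [norm_sub_sq_real, ← real_inner_self_eq_norm_sq, ← real_inner_self_eq_norm_sq, hφ, hφ, hφ,
      sub_self, sub_self]
    ring
  refine continuous_iff_continuousAt.2 fun a => tendsto_iff_norm_sub_tendsto_zero.2 ?_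
  have hsqrt : Continuous fun x => √(2 * (K 0 - K (x - a))) := by fun_prop
  simpa [← norm_sub_sq] using hsqrt.tendsto a

end FeatureMap

section UniformMeasure

/-- The uniform probability measure on the interval `(0, ℓ]`. -/
noncomputable def uniformIoc (ℓ : ℝ) : Measure ℝ :=
  ProbabilityTheory.cond volume (Set.Ioc 0 ℓ)

variable {ℓ : ℝ}

theorem isProbabilityMeasure_uniformIoc (hℓ : 0 < ℓ) : IsProbabilityMeasure (uniformIoc ℓ) :=
  ProbabilityTheory.cond_isProbabilityMeasure_of_finite (by simpa using hℓ) (by simp)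

theorem ae_mem_uniformIoc : ∀ᵐ t ∂uniformIoc ℓ, t ∈ Set.Ioc 0 ℓ :=
  ProbabilityTheory.ae_cond_mem measurableSet_Ioc

theorem integral_uniformIoc {F : Type*} [NormedAddCommGroup F] [NormedSpace ℝ F] (hℓ : 0 ≤ ℓ)
    (f : ℝ → F) : ∫ t, f t ∂uniformIoc ℓ = ℓ⁻¹ • ∫ t in 0..ℓ, f t := by
  rw [uniformIoc, ProbabilityTheory.cond, integral_smul_measure, Real.volume_Ioc, sub_zero,
    ENNReal.toReal_inv, ENNReal.toReal_ofReal hℓ, intervalIntegral.integral_of_le hℓ]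

theorem uniformIoc_ball_le (hℓ : 0 < ℓ) (x w : ℝ) :
    uniformIoc ℓ (Metric.ball x w) ≤ ENNReal.ofReal (2 * w / ℓ) := by
  rw [uniformIoc, ProbabilityTheory.cond_apply measurableSet_Ioc, Real.volume_Ioc, sub_zero,
    div_eq_inv_mul, ENNReal.ofReal_mul (inv_nonneg.2 hℓ.le), ENNReal.ofReal_inv_of_pos hℓ,
    ← Real.volume_ball x]
  gcongr
  exact Set.inter_subset_right

end UniformMeasure

section AbsPrimitive

/-- The primitive of the absolute value of the even extension of a radial profile. -/
noncomputable def absPrimitive (k : ℝ → ℝ) (x : ℝ) : ℝ := ∫ t in 0..x, |k (|t|)|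

variable {k : ℝ → ℝ}

@[simp]
theorem absPrimitive_zero : absPrimitive k 0 = 0 := intervalIntegral.integral_same

theorem absPrimitive_sub (hk : Continuous fun t => k |t|) (x y : ℝ) :
    absPrimitive k y - absPrimitive k x = ∫ t in x..y, |k (|t|)| :=
  intervalIntegral.integral_interval_sub_left (hk.abs.intervalIntegrable _ _)
    (hk.abs.intervalIntegrable _ _)

theorem monotone_absPrimitive (hk : Continuous fun t => k |t|) : Monotone (absPrimitive k) :=
  fun x y hxy => sub_nonneg.1 <| by
    rw [absPrimitive_sub hk]
    exact intervalIntegral.integral_nonneg hxy fun _ _ => abs_nonneg _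

theorem absPrimitive_nonneg (hk : Continuous fun t => k |t|) {x : ℝ} (hx : 0 ≤ x) :
    0 ≤ absPrimitive k x :=
  absPrimitive_zero (k := k) ▸ monotone_absPrimitive hk hx

theorem hasDerivAt_absPrimitive (hk : Continuous fun t => k |t|) (x : ℝ) :
    HasDerivAt (absPrimitive k) |k (|x|)| x :=
  hk.abs.integral_hasStrictDerivAt 0 x |>.hasDerivAt

theorem integral_abs_profile_shift (hk : Continuous fun t => k |t|) {x s ℓ : ℝ} (hx : 0 ≤ x)
    (hxℓ : x ≤ ℓ) (hs : 0 ≤ s) :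
    ∫ y in 0..ℓ, |k (|x - y| + s)| =
      (absPrimitive k (x + s) - absPrimitive k s) +
        (absPrimitive k (ℓ - x + s) - absPrimitive k s) := by
  have hshift : Continuous fun y => |k (|x - y| + s)| := by
    have h : Continuous fun y => |k (|(|x - y| + s)|)| := hk.abs.comp (by fun_prop)
    simpa only [abs_of_nonneg (add_nonneg (abs_nonneg _) hs)] using h
  rw [← intervalIntegral.integral_add_adjacent_intervals (b := x)
    (hshift.intervalIntegrable _ _) (hshift.intervalIntegrable _ _)]
  have left_part : ∫ y in 0..x, |k (|x - y| + s)| = ∫ t in s..x + s, |k (|t|)| := by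
    rw [intervalIntegral.integral_congr (g := fun y => |k (|x + s - y|)|) fun y hy => ?_,
      intervalIntegral.integral_comp_sub_left (fun t => |k (|t|)|)]
    · simp
    · rw [Set.uIcc_of_le hx] at hy
      have distance : |x - y| + s = |x + s - y| := by
        rw [abs_of_nonneg (sub_nonneg.2 hy.2), abs_of_nonneg (by linarith [hy.2]),
          sub_add_eq_add_sub]
      simp only [distance]
  have right_part : ∫ y in x..ℓ, |k (|x - y| + s)| = ∫ t in s..ℓ - x + s, |k (|t|)| := by
    rw [intervalIntegral.integral_congr (g := fun y => |k (|y - (x - s)|)|) fun y hy => ?_,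
      intervalIntegral.integral_comp_sub_right (fun t => |k (|t|)|)]
    · simp [sub_sub_eq_add_sub, sub_add_eq_add_sub]
    · rw [Set.uIcc_of_le hxℓ] at hy
      have distance : |x - y| + s = |y - (x - s)| := by
        rw [abs_sub_comm, abs_of_nonneg (sub_nonneg.2 hy.1), abs_of_nonneg (by linarith [hy.1]),
          sub_sub_eq_add_sub, sub_add_eq_add_sub]
      simp only [distance]
  rw [left_part, right_part, absPrimitive_sub hk, absPrimitive_sub hk]

end AbsPrimitive

section AlmostDecreasing

/-- The profile `k` is positive on `[r₀, ∞)` and decreasing there up to the factor `C`. -/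
structure AlmostDecreasingFrom (k : ℝ → ℝ) (C r₀ : ℝ) : Prop where
  threshold_pos : 0 < r₀
  pos {x : ℝ} (hx : r₀ ≤ x) : 0 < k x
  le_mul {x y : ℝ} (hx : r₀ ≤ x) (hxy : x ≤ y) : k y ≤ C * k x

namespace AlmostDecreasingFrom

variable {k : ℝ → ℝ} {r₀ C x y : ℝ}

theorem abs_profile_abs (h : AlmostDecreasingFrom k C r₀) (hx : r₀ ≤ x) : |k (|x|)| = k x := by
  rw [abs_of_nonneg (h.threshold_pos.le.trans hx), abs_of_pos (h.pos hx)]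

theorem le_absPrimitive_sub (h : AlmostDecreasingFrom k C r₀) (hk : Continuous fun t => k |t|)
    (hx : r₀ ≤ x) (hxy : x ≤ y) :
    (y - x) * k y ≤ C * (absPrimitive k y - absPrimitive k x) := by
  rw [absPrimitive_sub hk, ← intervalIntegral.integral_const_mul, ← smul_eq_mul,
    ← intervalIntegral.integral_const]
  refine intervalIntegral.integral_mono_on hxy intervalIntegrable_const
    ((hk.abs.const_mul C).intervalIntegrable _ _) fun t ht => ?_
  rw [h.abs_profile_abs (hx.trans ht.1)]
  exact h.le_mul (hx.trans ht.1) ht.2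

theorem absPrimitive_sub_le (h : AlmostDecreasingFrom k C r₀) (hk : Continuous fun t => k |t|)
    (hx : r₀ ≤ x) (hxy : x ≤ y) :
    absPrimitive k y - absPrimitive k x ≤ (y - x) * (C * k x) := by
  rw [absPrimitive_sub hk, ← smul_eq_mul (y - x), ← intervalIntegral.integral_const]
  refine intervalIntegral.integral_mono_on hxy (hk.abs.intervalIntegrable _ _)
    intervalIntegrable_const fun t ht => ?_
  rw [h.abs_profile_abs (hx.trans ht.1)]
  exact h.le_mul hx ht.1

theorem mul_profile_le_absPrimitive (h : AlmostDecreasingFrom k C r₀)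
    (hk : Continuous fun t => k |t|) (hC : 0 ≤ C) (hx : 2 * r₀ ≤ x) :
    x * k x ≤ 2 * C * absPrimitive k x := by
  have hr₀ := h.threshold_pos
  have upper_half := h.le_absPrimitive_sub hk (x := x / 2) (y := x) (by linarith) (by linarith)
  have lower_half := mul_nonneg hC (absPrimitive_nonneg hk (x := x / 2) (by linarith))
  linarith

theorem absPrimitive_two_mul_le (h : AlmostDecreasingFrom k C r₀)
    (hk : Continuous fun t => k |t|) (hC : 0 ≤ C) (hx : 2 * r₀ ≤ x) :
    absPrimitive k (2 * x) ≤ (1 + 2 * C ^ 2) * absPrimitive k x := by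
  have hr₀ := h.threshold_pos
  have increment := h.absPrimitive_sub_le hk (x := x) (y := 2 * x) (by linarith) (by linarith)
  have value := mul_le_mul_of_nonneg_left (h.mul_profile_le_absPrimitive hk hC hx) hC
  linarith

end AlmostDecreasingFrom

end AlmostDecreasing

section RegularVariation

variable {k : ℝ → ℝ} {α : ℝ}

theorem RegularlyVarying.eventually_pos (h : RegularlyVarying k α) : ∀ᶠ x in atTop, 0 < k x := by
  obtain ⟨-, L, ⟨-, hL, -⟩, hlim⟩ := h
  filter_upwards [hlim.eventually_const_lt one_pos, eventually_gt_atTop 0] with x hx hx0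
  exact (div_pos_iff_of_pos_right (mul_pos (Real.rpow_pos_of_pos hx0 _) (hL x hx0))).1 hx

theorem RegularlyVarying.tendsto_div (h : RegularlyVarying k α) {a : ℝ} (ha : 0 < a) :
    Tendsto (fun x => k (a * x) / k x) atTop (nhds (a ^ (-α))) := by
  have hpos := h.eventually_pos
  obtain ⟨-, L, ⟨-, hL, hslow⟩, hlim⟩ := h
  have hlim_comp := hlim.comp (tendsto_id.const_mul_atTop ha)
  have product := ((hlim_comp.mul (hlim.inv₀ one_ne_zero)).mul (hslow a ha)).mul_const (a ^ (-α))
  simp only [inv_one, one_mul, mul_one] at product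
  refine product.congr' ?_
  filter_upwards [hpos, eventually_gt_atTop 0] with x hx hx0
  have hLx := hL x hx0
  have hLax := hL (a * x) (mul_pos ha hx0)
  have : x ^ (-α) ≠ 0 ∧ a ^ (-α) ≠ 0 :=
    ⟨(Real.rpow_pos_of_pos hx0 _).ne', (Real.rpow_pos_of_pos ha _).ne'⟩
  simp only [Function.comp, id]
  rw [Real.mul_rpow ha.le hx0.le]
  field_simp

theorem exists_almostDecreasingFrom (hpos : ∀ᶠ x in atTop, 0 < k x)
    (hratio : ∀ ε : ℝ, 0 < ε → ∃ r₀ : ℝ, ∀ x y : ℝ, r₀ ≤ x → x ≤ y → k y / k x - 1 ≤ ε)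
    {C : ℝ} (hC : 1 < C) : ∃ r₀, AlmostDecreasingFrom k C r₀ := by
  obtain ⟨a, ha⟩ := eventually_atTop.1 hpos
  obtain ⟨b, hb⟩ := hratio (C - 1) (sub_pos.2 hC)
  refine ⟨max 1 (max a b), by positivity, fun hx => ha _ (by simp_all), fun {x y} hx hxy => ?_⟩
  simp only [max_le_iff] at hx
  rw [← div_le_iff₀ (ha x hx.2.1)]
  linarith [hb x y hx.2.2 hxy]

theorem RegularlyVarying.exists_eventually_le_mul (hk : RegularlyVarying k α)
    (hdec : ∀ C, 1 < C → ∃ r₀, AlmostDecreasingFrom k C r₀) {C : ℝ} (hC : 1 < C) :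
    ∃ θ, 0 < θ ∧ θ < 1 ∧ ∀ᶠ x in atTop, ∀ z, θ * x ≤ z → k z ≤ C * k x := by
  have hsqrt : 1 < √C := by simpa using Real.sqrt_lt_sqrt zero_le_one hC
  obtain ⟨r₀, hr₀⟩ := hdec _ hsqrt
  have near_one : Tendsto (fun θ : ℝ => θ ^ (-α)) (nhdsWithin 1 (Set.Iio 1)) (nhds 1) := by
    simpa using (Real.continuousAt_rpow_const 1 (-α) (.inl one_ne_zero)).tendsto.mono_left
      nhdsWithin_le_nhds
  obtain ⟨θ, ⟨hθ0, hθ1⟩, hθ⟩ := (Filter.Eventually.and (Ioo_mem_nhdsLT (zero_lt_one' ℝ))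
    (near_one.eventually_lt_const hsqrt)).exists
  refine ⟨θ, hθ0, hθ1, ?_⟩
  filter_upwards [(hk.tendsto_div hθ0).eventually_lt_const hθ, hk.eventually_pos,
    eventually_ge_atTop (r₀ / θ)] with x hratio hpos hx z hz
  rw [div_lt_iff₀ hpos] at hratio
  rw [div_le_iff₀' hθ0] at hx
  calc k z ≤ √C * k (θ * x) := hr₀.le_mul hx hz
    _ ≤ √C * (√C * k x) := by gcongr
    _ = C * k x := by rw [← mul_assoc, Real.mul_self_sqrt (zero_le_one.trans hC.le)]

end RegularVariation

section Karamata

theorem forall_ge_of_le_two_mul {P : ℝ → Prop} {a : ℝ} (ha : 0 < a)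
    (base : ∀ x, a ≤ x → x ≤ 2 * a → P x) (double : ∀ x, a ≤ x → P x → P (2 * x)) :
    ∀ x, a ≤ x → P x := by
  have below (n : ℕ) : ∀ x, a ≤ x → x ≤ 2 ^ n * (2 * a) → P x := by
    induction n with
    | zero => simpa using base
    | succ n ih =>
      intro x hx hxn
      rcases le_total x (2 * a) with hxa | hxa
      · exact base x hx hxa
      · rw [pow_succ] at hxn
        have half := double (x / 2) (by linarith) (ih _ (by linarith) (by linarith))
        rwa [mul_div_cancel₀ x two_ne_zero] at half
  intro x hx
  obtain ⟨n, hn⟩ := pow_unbounded_of_one_lt (x / (2 * a)) one_lt_two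
  exact below n x hx ((div_lt_iff₀ (by positivity)).1 hn).le

variable {k : ℝ → ℝ} {α C r₀ q a : ℝ}

theorem RegularlyVarying.exists_growth (hk : RegularlyVarying k α) (hα : α < 1) :
    ∃ q, 1 < q ∧ ∀ᶠ x in atTop, q * (x * k x) ≤ 2 * x * k (2 * x) := by
  have half_lt : (1 : ℝ) / 2 < 2 ^ (-α) := by
    rw [one_div, ← Real.rpow_neg_one]
    exact Real.rpow_lt_rpow_of_exponent_lt one_lt_two (by linarith)
  obtain ⟨b, hb, hbα⟩ := exists_between half_lt
  refine ⟨2 * b, by linarith, ?_⟩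
  filter_upwards [(hk.tendsto_div two_pos).eventually_const_lt hbα, hk.eventually_pos,
    eventually_gt_atTop 0] with x hratio hpos hx
  rw [lt_div_iff₀ hpos] at hratio
  nlinarith

namespace AlmostDecreasingFrom

theorem isBigO_absPrimitive (h : AlmostDecreasingFrom k C r₀) (hk : Continuous fun t => k |t|)
    (hC : 0 < C) (hq : 1 < q) (ha : r₀ ≤ a)
    (growth : ∀ x, a ≤ x → q * (x * k x) ≤ 2 * x * k (2 * x)) :
    absPrimitive k =O[atTop] fun x => x * k x := by
  have ha0 : 0 < a := h.threshold_pos.trans_le ha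
  have base_pos : 0 < a * k (2 * a) := mul_pos ha0 (h.pos (by linarith))
  obtain ⟨M, hMq, hMa⟩ : ∃ M, C ≤ M * (q - 1) ∧ C * absPrimitive k (2 * a) ≤ M * (a * k (2 * a)) :=
    ⟨max (C / (q - 1)) (C * absPrimitive k (2 * a) / (a * k (2 * a))),
      (div_le_iff₀ (sub_pos.2 hq)).1 (le_max_left _ _), (div_le_iff₀ base_pos).1 (le_max_right _ _)⟩
  have hM : 0 < M := pos_of_mul_pos_left (hC.trans_le hMq) (sub_pos.2 hq).le
  have bound : ∀ x, a ≤ x → absPrimitive k x ≤ M * (x * k x) := by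
    refine forall_ge_of_le_two_mul ha0 (fun x hx hxa => ?_) fun x hx ih => ?_
    · refine le_of_mul_le_mul_left ?_ hC
      calc C * absPrimitive k x ≤ C * absPrimitive k (2 * a) := by
            gcongr; exact monotone_absPrimitive hk hxa
        _ ≤ M * (a * k (2 * a)) := hMa
        _ ≤ M * (x * (C * k x)) := by
            have hle := h.le_mul (ha.trans hx) hxa
            have hpos := h.pos (x := 2 * a) (by linarith)
            have hx0 := ha0.le.trans hx
            gcongr
        _ = C * (M * (x * k x)) := by ring
    · have hxk : 0 < x * k x := mul_pos (ha0.trans_le hx) (h.pos (ha.trans hx))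
      have increment := h.absPrimitive_sub_le hk (ha.trans hx) (y := 2 * x) (by linarith)
      calc absPrimitive k (2 * x) ≤ (M + C) * (x * k x) := by linarith
        _ ≤ M * (q * (x * k x)) := by nlinarith
        _ ≤ M * (2 * x * k (2 * x)) := mul_le_mul_of_nonneg_left (growth x hx) hM.le
  refine .of_bound M (eventually_atTop.2 ⟨a, fun x hx => ?_⟩)
  rw [Real.norm_of_nonneg (absPrimitive_nonneg hk (ha0.le.trans hx)),
    Real.norm_of_nonneg (mul_pos (ha0.trans_le hx) (h.pos (ha.trans hx))).le]
  exact bound x hx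

theorem tendsto_absPrimitive (h : AlmostDecreasingFrom k C r₀) (hk : Continuous fun t => k |t|)
    (hC : 0 < C) (hq : 1 < q) (ha : 2 * r₀ ≤ a)
    (growth : ∀ x, a ≤ x → q * (x * k x) ≤ 2 * x * k (2 * x)) :
    Tendsto (absPrimitive k) atTop atTop := by
  have hr₀ := h.threshold_pos
  have ha0 : 0 < a := by linarith
  have dyadic_ge (n : ℕ) : a ≤ 2 ^ n * a := le_mul_of_one_le_left ha0.le (one_le_pow₀ one_le_two)
  have geometric (n : ℕ) : q ^ n * (a * k a) ≤ 2 ^ n * a * k (2 ^ n * a) := by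
    have := geom_le (u := fun n : ℕ => 2 ^ n * a * k (2 ^ n * a)) (zero_le_one.trans hq.le) n
      fun m _ => by simpa only [pow_succ', mul_assoc] using growth _ (dyadic_ge m)
    simpa using this
  have diverges : Tendsto (fun n : ℕ => q ^ n * (a * k a)) atTop atTop :=
    (tendsto_pow_atTop_atTop_of_one_lt hq).atTop_mul_const (mul_pos ha0 (h.pos (by linarith)))
  have along_dyadic : Tendsto (fun n : ℕ => 2 * C * absPrimitive k (2 ^ n * a)) atTop atTop :=
    tendsto_atTop_mono (fun n => (geometric n).trans
      (h.mul_profile_le_absPrimitive hk hC.le (ha.trans (dyadic_ge n)))) diverges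
  exact tendsto_atTop_of_monotone_of_subseq (monotone_absPrimitive hk)
    ((tendsto_const_mul_atTop_of_pos (by positivity)).1 along_dyadic)

theorem mul_profile_isBigO_absPrimitive (h : AlmostDecreasingFrom k C r₀)
    (hk : Continuous fun t => k |t|) (hC : 0 ≤ C) :
    (fun x => x * k x) =O[atTop] absPrimitive k := by
  refine .of_bound (2 * C) (eventually_atTop.2 ⟨2 * r₀, fun x hx => ?_⟩)
  have hr₀ := h.threshold_pos
  rw [Real.norm_of_nonneg (absPrimitive_nonneg hk (by linarith)),
    Real.norm_of_nonneg (mul_pos (by linarith) (h.pos (by linarith))).le]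
  exact h.mul_profile_le_absPrimitive hk hC hx

end AlmostDecreasingFrom

theorem tendsto_absPrimitive_and_isTheta_of_index_lt_one (hk : Continuous fun t => k |t|)
    (hdec : AlmostDecreasingFrom k C r₀) (hC : 0 < C) (hrv : RegularlyVarying k α) (hα : α < 1) :
    Tendsto (absPrimitive k) atTop atTop ∧ absPrimitive k =Θ[atTop] fun x => x * k x := by
  obtain ⟨q, hq, hgrowth⟩ := hrv.exists_growth hα
  obtain ⟨a, ha⟩ := eventually_atTop.1 (hgrowth.and (eventually_ge_atTop (2 * r₀)))
  have hr₀ := hdec.threshold_pos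
  have ha_ge : 2 * r₀ ≤ a := (ha a le_rfl).2
  have growth : ∀ x, a ≤ x → q * (x * k x) ≤ 2 * x * k (2 * x) := fun x hx => (ha x hx).1
  exact ⟨hdec.tendsto_absPrimitive hk hC hq ha_ge growth,
    hdec.isBigO_absPrimitive hk hC hq (by linarith) growth,
    hdec.mul_profile_isBigO_absPrimitive hk hC.le⟩

theorem exists_eventually_le_mul_add_of_deriv_le {F G F' G' : ℝ → ℝ} {C : ℝ}
    (hF : ∀ᶠ x in atTop, HasDerivAt F (F' x) x) (hG : ∀ᶠ x in atTop, HasDerivAt G (G' x) x)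
    (h : ∀ᶠ x in atTop, F' x ≤ C * G' x) : ∃ b, ∀ᶠ x in atTop, F x ≤ C * G x + b := by
  obtain ⟨a, ha⟩ := eventually_atTop.1 ((hF.and hG).and h)
  have hderiv x (hx : a ≤ x) : HasDerivAt (fun x => C * G x - F x) (C * G' x - F' x) x :=
    ((ha x hx).1.2.const_mul C).sub (ha x hx).1.1
  have mono : MonotoneOn (fun x => C * G x - F x) (Set.Ici a) := by
    refine monotoneOn_of_deriv_nonneg (convex_Ici a)
      (fun x hx => (hderiv x hx).continuousAt.continuousWithinAt) ?_ ?_ <;>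
      rw [interior_Ici]
    · exact fun x hx => (hderiv x hx.le).differentiableAt.differentiableWithinAt
    · intro x hx
      rw [(hderiv x (Set.mem_Ioi.1 hx).le).deriv]
      exact sub_nonneg.2 (ha x (Set.mem_Ioi.1 hx).le).2
  refine ⟨F a - C * G a, eventually_atTop.2 ⟨a, fun x hx => ?_⟩⟩
  linarith [mono Set.self_mem_Ici hx hx]

theorem isBigO_of_eventually_le_mul_add {F G : ℝ → ℝ} {b : ℝ} (hF : ∀ᶠ x in atTop, 0 ≤ F x)
    (hG : Tendsto G atTop atTop) (h : ∀ᶠ x in atTop, F x ≤ C * G x + b) : F =O[atTop] G := by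
  refine .of_bound (C + |b|) ?_
  filter_upwards [hF, h, hG.eventually_ge_atTop 1] with x hFx hx hGx
  rw [Real.norm_of_nonneg hFx, Real.norm_of_nonneg (zero_le_one.trans hGx)]
  nlinarith [le_abs_self b, abs_nonneg b]

theorem tendsto_atTop_and_isTheta_of_deriv_isTheta {F G F' G' : ℝ → ℝ}
    (hF : ∀ᶠ x in atTop, HasDerivAt F (F' x) x) (hG : ∀ᶠ x in atTop, HasDerivAt G (G' x) x)
    (hF' : ∀ᶠ x in atTop, 0 ≤ F' x) (hG' : ∀ᶠ x in atTop, 0 ≤ G' x) (h : F' =Θ[atTop] G')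
    (hG_top : Tendsto G atTop atTop) : Tendsto F atTop atTop ∧ F =Θ[atTop] G := by
  obtain ⟨C₁, -, hFG⟩ := h.isBigO.exists_pos
  obtain ⟨C₂, hC₂, hGF⟩ := h.isBigO_symm.exists_pos
  obtain ⟨b₁, hFG⟩ := exists_eventually_le_mul_add_of_deriv_le (C := C₁) hF hG <| by
    filter_upwards [hFG.bound, hF', hG'] with x hx hFx hGx
    rwa [Real.norm_of_nonneg hFx, Real.norm_of_nonneg hGx] at hx
  obtain ⟨b₂, hGF⟩ := exists_eventually_le_mul_add_of_deriv_le (C := C₂) hG hF <| by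
    filter_upwards [hGF.bound, hF', hG'] with x hx hFx hGx
    rwa [Real.norm_of_nonneg hFx, Real.norm_of_nonneg hGx] at hx
  have hF_top : Tendsto F atTop atTop := by
    have := tendsto_atTop_add_const_right atTop (-b₂) (tendsto_atTop_mono' atTop hGF hG_top)
    simpa [tendsto_const_mul_atTop_of_pos hC₂] using this
  exact ⟨hF_top, isBigO_of_eventually_le_mul_add (hF_top.eventually_ge_atTop 0) hG_top hFG,
    isBigO_of_eventually_le_mul_add (hG_top.eventually_ge_atTop 0) hF_top hGF⟩

theorem hasDerivAt_log_rpow_one_sub {x : ℝ} (γ : ℝ) (hx : 1 < x) :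
    HasDerivAt (fun x => Real.log x ^ (1 - γ)) ((1 - γ) * (x⁻¹ * Real.log x ^ (-γ))) x := by
  have := (Real.hasDerivAt_log (zero_lt_one.trans hx).ne').rpow_const (p := 1 - γ)
    (.inl (Real.log_pos hx).ne')
  rwa [sub_sub_cancel_left, mul_comm _ (1 - γ), mul_assoc] at this

theorem isEquivalent_mul_mul_log {γ : ℝ} (hlim : k ~[atTop] fun x => x⁻¹ * Real.log x ^ (-γ)) :
    (fun x => x * k x * Real.log x) ~[atTop] fun x => Real.log x ^ (1 - γ) := by
  refine ((IsEquivalent.refl (u := id)).mul hlim |>.mul (IsEquivalent.refl (u := Real.log)))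
    |>.congr_right ?_
  filter_upwards [eventually_gt_atTop 1] with x hx
  have hlog := (Real.log_pos hx).ne'
  simp only [Pi.mul_apply, id]
  rw [mul_inv_cancel_left₀ (by linarith), ← Real.rpow_add_one hlog, neg_add_eq_sub]

theorem tendsto_absPrimitive_and_isTheta_of_isEquivalent_inv_mul_log {γ : ℝ}
    (hk : Continuous fun t => k |t|) (hγ : γ < 1)
    (hlim : k ~[atTop] fun x => x⁻¹ * Real.log x ^ (-γ)) :
    Tendsto (absPrimitive k) atTop atTop ∧
      absPrimitive k =Θ[atTop] fun x => x * k x * Real.log x := by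
  have hγ' : 0 < 1 - γ := sub_pos.2 hγ
  have deriv_isTheta : (fun x => |k (|x|)|) =Θ[atTop]
      fun x => (1 - γ) * (x⁻¹ * Real.log x ^ (-γ)) := by
    refine (isTheta_norm_right.1 (.of_norm_eventuallyEq ?_)).trans
      (hlim.isTheta.const_mul_right hγ'.ne')
    filter_upwards [eventually_ge_atTop 0] with x hx
    simp [abs_of_nonneg hx]
  obtain ⟨hJ, hJ_isTheta⟩ := tendsto_atTop_and_isTheta_of_deriv_isTheta
    (.of_forall (hasDerivAt_absPrimitive hk))
    ((eventually_gt_atTop 1).mono fun x => hasDerivAt_log_rpow_one_sub γ)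
    (.of_forall fun _ => abs_nonneg _) (by
      filter_upwards [eventually_gt_atTop 1] with x hx
      have := Real.log_pos hx
      positivity) deriv_isTheta ((tendsto_rpow_atTop hγ').comp Real.tendsto_log_atTop)
  exact ⟨hJ, hJ_isTheta.trans (isEquivalent_mul_mul_log hlim).isTheta.symm⟩

theorem isLittleO_id_of_tendsto_log_max_div_log {r : ℝ → ℝ} (hr : ∀ᶠ R in atTop, 0 ≤ r R)
    (h : Tendsto (fun R => Real.log (max (r R) 2) / Real.log R) atTop (nhds 0)) :
    r =o[atTop] fun R : ℝ => R := by
  have quotient : Tendsto (fun R => Real.exp ((Real.log (max (r R) 2) / Real.log R - 1) *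
      Real.log R)) atTop (nhds 0) := by
    have hlim := (h.sub_const 1).neg_mul_atTop (by norm_num) Real.tendsto_log_atTop
    exact Real.tendsto_exp_atBot.comp hlim
  have bound : r =O[atTop] fun R => Real.exp ((Real.log (max (r R) 2) / Real.log R - 1) *
      Real.log R) * R := by
    refine .of_bound 1 ?_
    filter_upwards [hr, eventually_gt_atTop 1] with R hrR hR
    have hlog := Real.log_pos hR
    rw [sub_one_mul, div_mul_cancel₀ _ hlog.ne', Real.exp_sub, Real.exp_log (by positivity),
      Real.exp_log (by linarith), div_mul_cancel₀ _ (by linarith), one_mul,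
      Real.norm_of_nonneg hrR, Real.norm_of_nonneg (by positivity)]
    exact le_max_left _ _
  refine bound.trans_isLittleO ?_
  simpa using ((isLittleO_one_iff ℝ).2 quotient).mul_isBigO (isBigO_refl (fun R : ℝ => R) atTop)

end Karamata

section Segment

variable {E H : Type*} [NormedAddCommGroup E] [NormedAddCommGroup H] [InnerProductSpace ℝ H]
  {k : ℝ → ℝ}

theorem IsRadialFeatureMap.norm_sq_integral_uniformIoc_le [CompleteSpace H] {ψ : ℝ → H}
    (hψ : IsRadialFeatureMap ψ k) {ℓ : ℝ} (hℓ : 0 < ℓ) :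
    ‖∫ t, ψ t ∂uniformIoc ℓ‖ ^ 2 ≤ 2 * absPrimitive k ℓ / ℓ := by
  have := isProbabilityMeasure_uniformIoc hℓ
  have hk := hψ.continuous_profile_abs
  rw [← real_inner_self_eq_norm_sq]
  refine inner_integral_le_of_ae_le_const hψ.integrable ?_
  filter_upwards [ae_mem_uniformIoc] with t ⟨ht0, htℓ⟩
  have abs_shift : ∫ u in 0..ℓ, |k (|t - u|)| = absPrimitive k t + absPrimitive k (ℓ - t) := by
    simpa using integral_abs_profile_shift hk ht0.le htℓ le_rfl
  have left_le := monotone_absPrimitive hk htℓ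
  have right_le := monotone_absPrimitive hk (sub_le_self ℓ ht0.le)
  have hkt : Continuous fun u => k |t - u| := hk.comp (continuous_const.sub continuous_id)
  rw [real_inner_comm, hψ.inner_integral_eq, integral_uniformIoc hℓ.le, smul_eq_mul,
    div_eq_inv_mul]
  gcongr
  calc ∫ u in 0..ℓ, k ‖t - u‖ ≤ ∫ u in 0..ℓ, |k (|t - u|)| :=
        intervalIntegral.integral_mono_on hℓ.le (hkt.intervalIntegrable _ _)
          (hkt.abs.intervalIntegrable _ _) fun _ _ => le_abs_self _
    _ ≤ 2 * absPrimitive k ℓ := by linarith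

theorem absPrimitive_half_sub_le_integral (hk : Continuous fun t => k |t|) {R s p : ℝ}
    (hs : 0 ≤ s) (hp : p ∈ Set.Icc 0 R) :
    absPrimitive k (R / 2) - absPrimitive k s ≤ ∫ y in 0..R, |k (|p - y| + s)| := by
  rw [integral_abs_profile_shift hk hp.1 hp.2 hs]
  have left_nonneg := monotone_absPrimitive hk (show s ≤ p + s by linarith [hp.1])
  have right_nonneg := monotone_absPrimitive hk (show s ≤ R - p + s by linarith [hp.2])
  rcases le_total p (R / 2) with h | h
  · linarith [monotone_absPrimitive hk (show R / 2 ≤ R - p + s by linarith)]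
  · linarith [monotone_absPrimitive hk (show R / 2 ≤ p + s by linarith)]

variable [InnerProductSpace ℝ E] {φ : E → H} {e x : E} {r₀ p s R : ℝ}

theorem IsRadialFeatureMap.half_abs_profile_sub_indicator_le (hφ : IsRadialFeatureMap φ k)
    (hdec : AlmostDecreasingFrom k 2 r₀) (he : ‖e‖ = 1) (hx : ‖x - p • e‖ ≤ s) (y : ℝ) :
    |k (|p - y| + s)| / 2 - (Metric.ball ⟪e, x⟫_ℝ r₀).indicator (fun _ => 2 * k 0) y ≤
      k ‖x - y • e‖ := by
  have distance_le : ‖x - y • e‖ ≤ |p - y| + s := by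
    calc ‖x - y • e‖ = ‖(p - y) • e + (x - p • e)‖ := by rw [sub_smul]; abel_nf
      _ ≤ |p - y| + s := by
        grw [norm_add_le, norm_smul, he, hx, mul_one, Real.norm_eq_abs]
  have hs : 0 ≤ s := (norm_nonneg _).trans hx
  have profile_nonneg := hφ.profile_zero_nonneg
  rcases le_or_gt r₀ ‖x - y • e‖ with hfar | hnear
  · have indicator_nonneg : 0 ≤ (Metric.ball ⟪e, x⟫_ℝ r₀).indicator (fun _ => 2 * k 0) y :=
      Set.indicator_nonneg (fun _ _ => by positivity) y
    rw [abs_of_pos (hdec.pos (hfar.trans distance_le))]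
    linarith [hdec.le_mul hfar distance_le]
  · have mem_ball : y ∈ Metric.ball ⟪e, x⟫_ℝ r₀ := by
      refine lt_of_le_of_lt ?_ hnear
      calc dist y ⟪e, x⟫_ℝ = |⟪e, x - y • e⟫_ℝ| := by
            rw [inner_sub_right, inner_smul_right, real_inner_self_eq_norm_sq, he, one_pow,
              mul_one, dist_comm, Real.dist_eq]
        _ ≤ ‖x - y • e‖ := by simpa [he] using abs_real_inner_le_norm e (x - y • e)
    have abs_le_zero := (hφ.comp_smul he).abs_profile_abs_le (|p - y| + s)
    rw [abs_of_nonneg (add_nonneg (abs_nonneg _) hs)] at abs_le_zero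
    rw [Set.indicator_of_mem mem_ball]
    linarith [(abs_le.1 (hφ.abs_profile_le x (y • e))).1]

theorem IsRadialFeatureMap.integrable_abs_profile_shift {ψ : ℝ → H} (hψ : IsRadialFeatureMap ψ k)
    {μ : Measure ℝ} [IsFiniteMeasure μ] (hs : 0 ≤ s) :
    Integrable (fun y => |k (|p - y| + s)|) μ := by
  have hcont : Continuous fun y => |k (|(|p - y| + s)|)| :=
    hψ.continuous_profile_abs.abs.comp (by fun_prop)
  have h : Integrable (fun y => |k (|(|p - y| + s)|)|) μ :=
    .of_bound hcont.aestronglyMeasurable (k 0) <| .of_forall fun y => by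
      simpa only [Real.norm_eq_abs, abs_abs] using hψ.abs_profile_abs_le _
  simpa only [abs_of_nonneg (add_nonneg (abs_nonneg _) hs)] using h

variable [CompleteSpace H]

theorem IsRadialFeatureMap.le_inner_integral_uniformIoc (hφ : IsRadialFeatureMap φ k)
    (hdec : AlmostDecreasingFrom k 2 r₀) (he : ‖e‖ = 1) (hR : 0 < R) (hp : p ∈ Set.Icc 0 R)
    (hx : ‖x - p • e‖ ≤ s) :
    ((absPrimitive k (R / 2) - absPrimitive k s) / 2 - 4 * k 0 * r₀) / R ≤
      ⟪φ x, ∫ t, φ (t • e) ∂uniformIoc R⟫_ℝ := by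
  have := isProbabilityMeasure_uniformIoc hR
  have hψ := hφ.comp_smul he
  have hs : 0 ≤ s := (norm_nonneg _).trans hx
  have main_integrable : Integrable (fun y => |k (|p - y| + s)| / 2) (uniformIoc R) :=
    (hψ.integrable_abs_profile_shift hs).div_const 2
  have near_integrable : Integrable
      ((Metric.ball ⟪e, x⟫_ℝ r₀).indicator fun _ => 2 * k 0) (uniformIoc R) :=
    (integrable_const _).indicator measurableSet_ball
  have near_le : ∫ y, (Metric.ball ⟪e, x⟫_ℝ r₀).indicator (fun _ => 2 * k 0) y ∂uniformIoc R ≤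
      4 * k 0 * r₀ / R := by
    have ball_le := ENNReal.toReal_le_of_le_ofReal (by have := hdec.threshold_pos; positivity)
      (uniformIoc_ball_le hR ⟪e, x⟫_ℝ r₀)
    rw [integral_indicator_const _ measurableSet_ball, smul_eq_mul]
    calc _ ≤ 2 * r₀ / R * (2 * k 0) :=
          mul_le_mul_of_nonneg_right ball_le (by linarith [hφ.profile_zero_nonneg])
      _ = 4 * k 0 * r₀ / R := by ring
  have main_ge : (absPrimitive k (R / 2) - absPrimitive k s) / 2 / R ≤
      ∫ y, |k (|p - y| + s)| / 2 ∂uniformIoc R := by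
    rw [integral_uniformIoc hR.le, smul_eq_mul, intervalIntegral.integral_div, div_eq_inv_mul _ R]
    gcongr
    exact absPrimitive_half_sub_le_integral hψ.continuous_profile_abs hs hp
  calc _ ≤ ∫ y, |k (|p - y| + s)| / 2 ∂uniformIoc R -
        ∫ y, (Metric.ball ⟪e, x⟫_ℝ r₀).indicator (fun _ => 2 * k 0) y ∂uniformIoc R := by
        rw [sub_div]; exact sub_le_sub main_ge near_le
    _ ≤ ∫ y, ⟪φ x, φ (y • e)⟫_ℝ ∂uniformIoc R := by
        rw [← integral_sub main_integrable near_integrable]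
        refine integral_mono (main_integrable.sub near_integrable)
          (hψ.integrable.const_inner _) fun y => ?_
        rw [hφ.inner_eq]
        exact hφ.half_abs_profile_sub_indicator_le hdec he hx y
    _ = _ := integral_inner hψ.integrable _

variable [MeasurableSpace E] [BorelSpace E] [SecondCountableTopology E]

theorem IsRadialFeatureMap.absPrimitive_div_le_norm_sq_of_tube (hφ : IsRadialFeatureMap φ k)
    (hdec : AlmostDecreasingFrom k 2 r₀) (he : ‖e‖ = 1) (hR : 4 * r₀ ≤ R)
    (hJs : 36 * absPrimitive k s ≤ absPrimitive k R)
    (hJr₀ : 288 * (k 0 * r₀) ≤ absPrimitive k R) (hJ : 0 < absPrimitive k R) {μ : Measure E}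
    [IsProbabilityMeasure μ] (hμ : ∀ᵐ x ∂μ, ∃ p ∈ Set.Icc 0 R, ‖x - p • e‖ ≤ s) :
    absPrimitive k R / (2592 * R) ≤ ‖∫ x, φ x ∂μ‖ ^ 2 := by
  have hR0 : 0 < R := by linarith [hdec.threshold_pos]
  have hψ := hφ.comp_smul he
  set M := ∫ x, φ x ∂μ
  set N := ∫ t, φ (t • e) ∂uniformIoc R
  have doubling : absPrimitive k R ≤ 9 * absPrimitive k (R / 2) := by
    have := hdec.absPrimitive_two_mul_le hψ.continuous_profile_abs zero_le_two
      (x := R / 2) (by linarith)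
    rw [mul_div_cancel₀ R two_ne_zero] at this
    linarith
  have inner_ge : absPrimitive k R / (36 * R) ≤ ⟪N, M⟫_ℝ := by
    have := inner_integral_le_of_ae_le_const (x := -N) (C := -(absPrimitive k R / (36 * R)))
      hφ.integrable <| by
        filter_upwards [hμ] with x ⟨p, hp, hx⟩
        rw [inner_neg_left, real_inner_comm]
        refine neg_le_neg (le_trans ?_ (hφ.le_inner_integral_uniformIoc hdec he hR0 hp hx))
        rw [← div_div]
        gcongr
        linarith
    rwa [inner_neg_left, neg_le_neg_iff] at this
  have cauchy_schwarz : (absPrimitive k R / (36 * R)) ^ 2 ≤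
      2 * absPrimitive k R / R * ‖M‖ ^ 2 := by
    have lower_nonneg : 0 ≤ absPrimitive k R / (36 * R) := by positivity
    calc _ ≤ (‖N‖ * ‖M‖) ^ 2 :=
          pow_le_pow_left₀ lower_nonneg (inner_ge.trans (real_inner_le_norm N M)) 2
      _ ≤ 2 * absPrimitive k R / R * ‖M‖ ^ 2 := by
        grw [mul_pow, hψ.norm_sq_integral_uniformIoc_le hR0]
  refine le_of_mul_le_mul_left (cauchy_schwarz.trans' (le_of_eq ?_))
    (show 0 < 2 * absPrimitive k R / R by positivity)
  field_simp
  norm_num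

end Segment

section Smoothing

theorem conv_ball_le {G : Type*} [SeminormedAddCommGroup G] [MeasurableSpace G] [BorelSpace G]
    [SecondCountableTopology G] {μ ν : Measure G} [IsProbabilityMeasure μ] [SFinite ν]
    {w : ℝ} {b : ENNReal} (h : ∀ x, ν (Metric.ball x w) ≤ b) (x : G) :
    (μ ∗ ν) (Metric.ball x w) ≤ b := by
  have shift (y : G) : (y + ·) ⁻¹' Metric.ball x w = Metric.ball (x - y) w := by
    ext z
    simp [dist_eq_norm, sub_sub_eq_add_sub, add_comm]
  rw [Measure.conv, Measure.map_apply (by fun_prop) measurableSet_ball,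
    Measure.prod_apply (measurableSet_ball.preimage (by fun_prop))]
  calc _ ≤ ∫⁻ _, b ∂μ := lintegral_mono fun y => (congrArg ν (shift y)).trans_le (h (x - y))
    _ = b := by simp

theorem ae_conv_of_ae_ae {G : Type*} [AddMonoid G] [MeasurableSpace G] [MeasurableAdd₂ G]
    {μ ν : Measure G} [SFinite ν] {S : Set G} (hS : MeasurableSet S)
    (h : ∀ᵐ x ∂μ, ∀ᵐ y ∂ν, x + y ∈ S) : ∀ᵐ z ∂(μ ∗ ν), z ∈ S := by
  refine (ae_map_iff (by fun_prop) hS).2 ?_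
  exact (Measure.ae_prod_iff_ae_ae (hS.preimage (by fun_prop))).2 h

theorem IsRadialFeatureMap.norm_integral_conv_le {E H : Type*} [NormedAddCommGroup E]
    [MeasurableSpace E] [BorelSpace E] [SecondCountableTopology E] [NormedAddCommGroup H]
    [InnerProductSpace ℝ H] [CompleteSpace H] {φ : E → H} {k : ℝ → ℝ}
    (hφ : IsRadialFeatureMap φ k) (μ ν : Measure E) [IsProbabilityMeasure μ]
    [IsProbabilityMeasure ν] : ‖∫ x, φ x ∂(μ ∗ ν)‖ ≤ ‖∫ x, φ x ∂μ‖ := by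
  have translate (v : E) : ‖∫ x, φ (v + x) ∂μ‖ = ‖∫ x, φ x ∂μ‖ := by
    have hv : IsRadialFeatureMap (fun x => φ (v + x)) k :=
      ⟨hφ.continuous.comp (by fun_prop), fun x y => by rw [hφ.inner_eq, add_sub_add_left_eq_sub]⟩
    rw [← sq_eq_sq₀ (norm_nonneg _) (norm_nonneg _), hv.norm_sq_integral_eq,
      hφ.norm_sq_integral_eq]
  rw [Measure.conv_comm, integral_conv hφ.integrable]
  simpa [translate] using norm_integral_le_of_norm_le_const (μ := ν)
    (f := fun v => ∫ x, φ (v + x) ∂μ) (.of_forall fun v => (translate v).le)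

end Smoothing

section Placement

variable {E : Type*} [NormedAddCommGroup E] [MeasurableSpace E]

theorem exists_measurable_placement {n : ℕ} {c : Fin n → E} {r l N : ℝ} (hr : 0 < r)
    (hl : 0 < l) (hN : l * N / r < n)
    (hsep : ∀ i j : Fin n, |(i : ℝ) - (j : ℝ)| * r ≤ ‖c i - c j‖) :
    ∃ p : ℝ → E, Measurable p ∧ (∀ t ∈ Set.Icc 0 N, ∃ i, p t = c i) ∧
      ∀ t ∈ Set.Icc 0 N, ∀ u ∈ Set.Icc 0 N, l * |t - u| - r ≤ ‖p t - p u‖ := by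
  let p (t : ℝ) : E := if h : ⌊l * t / r⌋₊ < n then c ⟨⌊l * t / r⌋₊, h⟩ else 0
  have floor_lt {t : ℝ} (ht : t ∈ Set.Icc 0 N) : ⌊l * t / r⌋₊ < n := by
    have := ht.1
    refine (Nat.floor_lt (by positivity)).2 (lt_of_le_of_lt ?_ hN)
    gcongr
    exact ht.2
  have p_eq {t : ℝ} (ht : t ∈ Set.Icc 0 N) : p t = c ⟨⌊l * t / r⌋₊, floor_lt ht⟩ :=
    dif_pos (floor_lt ht)
  refine ⟨p, ?_, fun t ht => ⟨_, p_eq ht⟩, fun t ht u hu => ?_⟩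
  · exact (measurable_from_top (f := fun m : ℕ => if h : m < n then c ⟨m, h⟩ else 0)).comp
      (Nat.measurable_floor.comp (by fun_prop))
  · have floor_bounds {v : ℝ} (hv : v ∈ Set.Icc 0 N) :
        (⌊l * v / r⌋₊ : ℝ) * r ≤ l * v ∧ l * v < (⌊l * v / r⌋₊ + 1) * r := by
      have := hv.1
      rw [← le_div_iff₀ hr, ← div_lt_iff₀ hr]
      exact ⟨Nat.floor_le (by positivity), Nat.lt_floor_add_one _⟩
    obtain ⟨ht₁, ht₂⟩ := floor_bounds ht
    obtain ⟨hu₁, hu₂⟩ := floor_bounds hu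
    rw [p_eq ht, p_eq hu]
    refine le_trans ?_ (hsep _ _)
    rcases abs_cases (t - u) with ⟨h, -⟩ | ⟨h, -⟩ <;> rw [h]
    · linarith [mul_le_mul_of_nonneg_right (le_abs_self (⌊l * t / r⌋₊ - ⌊l * u / r⌋₊ : ℝ)) hr.le]
    · linarith [mul_le_mul_of_nonneg_right (neg_abs_le (⌊l * t / r⌋₊ - ⌊l * u / r⌋₊ : ℝ)) hr.le]

end Placement

section Transplant

variable {E H : Type*} [NormedAddCommGroup E] [NormedSpace ℝ E]

/-- The law of `p t + v • e`, where `t` has law `π` and `v` is independent and uniform on `(0, s]`: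
the measure `π` transplanted along `p` and spread over segments of length `s`. -/
noncomputable def segmentSpread [MeasurableSpace E] (π : Measure ℝ) (p : ℝ → E) (e : E) (s : ℝ) :
    Measure E :=
  (π.prod (uniformIoc s)).map fun q => p q.1 + q.2 • e

/-- The mean of `φ` over the segment `a + (0, s] • e`. -/
noncomputable def segmentMean [NormedAddCommGroup H] [NormedSpace ℝ H] (φ : E → H) (e : E) (s : ℝ)
    (a : E) : H :=
  ∫ v, φ (a + v • e) ∂uniformIoc s

section Measurable

variable [MeasurableSpace E] [BorelSpace E] [SecondCountableTopology E] {π : Measure ℝ}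
  {p : ℝ → E} {e : E} {s : ℝ}

theorem measurable_segmentSpread_map (hp : Measurable p) :
    Measurable fun q : ℝ × ℝ => p q.1 + q.2 • e :=
  (hp.comp measurable_fst).add (measurable_snd.smul_const e)

theorem isProbabilityMeasure_segmentSpread [IsProbabilityMeasure π] (hp : Measurable p)
    (hs : 0 < s) : IsProbabilityMeasure (segmentSpread π p e s) :=
  have := isProbabilityMeasure_uniformIoc hs
  Measure.isProbabilityMeasure_map (measurable_segmentSpread_map hp).aemeasurable

theorem ae_segmentSpread_mem (hp : Measurable p) (hs : 0 < s) (he : ‖e‖ = 1) {D : Set E}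
    (hD : MeasurableSet D) (h : ∀ᵐ t ∂π, Metric.closedBall (p t) s ⊆ D) :
    ∀ᵐ x ∂segmentSpread π p e s, x ∈ D := by
  have := isProbabilityMeasure_uniformIoc hs
  have hmap := measurable_segmentSpread_map (e := e) hp
  refine (ae_map_iff hmap.aemeasurable hD).2 ((Measure.ae_prod_iff_ae_ae (hmap hD)).2 ?_)
  filter_upwards [h] with t ht
  filter_upwards [ae_mem_uniformIoc] with v hv
  exact ht (by simp [norm_smul, he, abs_of_pos hv.1, hv.2])

variable [NormedAddCommGroup H] [InnerProductSpace ℝ H] {φ : E → H} {k : ℝ → ℝ}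
  [IsProbabilityMeasure π]

theorem IsRadialFeatureMap.integrable_segmentMean (hφ : IsRadialFeatureMap φ k)
    (hp : Measurable p) (hs : 0 < s) :
    Integrable (fun t => segmentMean φ e s (p t)) π :=
  have := isProbabilityMeasure_uniformIoc hs
  (hφ.integrable_comp (measurable_segmentSpread_map hp)).integral_prod_left

theorem IsRadialFeatureMap.integral_segmentSpread (hφ : IsRadialFeatureMap φ k)
    (hp : Measurable p) (hs : 0 < s) :
    ∫ x, φ x ∂segmentSpread π p e s = ∫ t, segmentMean φ e s (p t) ∂π := by
  have := isProbabilityMeasure_uniformIoc hs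
  have hmap := measurable_segmentSpread_map (e := e) hp
  rw [segmentSpread, integral_map hmap.aemeasurable hφ.continuous.aestronglyMeasurable,
    integral_prod _ (hφ.integrable_comp hmap)]
  rfl

end Measurable

variable [NormedAddCommGroup H] [InnerProductSpace ℝ H] [CompleteSpace H] {φ : E → H}
  {k : ℝ → ℝ} {e : E} {s : ℝ}

theorem IsRadialFeatureMap.inner_segmentMean_le (hφ : IsRadialFeatureMap φ k) (he : ‖e‖ = 1)
    (hs : 0 < s) (a b : E) :
    ⟪segmentMean φ e s a, segmentMean φ e s b⟫_ℝ ≤ 2 * absPrimitive k s / s := by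
  have norm_le (a : E) : ‖segmentMean φ e s a‖ ≤ √(2 * absPrimitive k s / s) :=
    Real.le_sqrt_of_sq_le ((hφ.comp_line a he).norm_sq_integral_uniformIoc_le hs)
  have sq_nonneg : 0 ≤ 2 * absPrimitive k s / s :=
    (sq_nonneg _).trans ((hφ.comp_line a he).norm_sq_integral_uniformIoc_le hs)
  grw [real_inner_le_norm, norm_le, norm_le, Real.mul_self_sqrt sq_nonneg]

theorem IsRadialFeatureMap.inner_segmentMean_le_of_forall_le (hφ : IsRadialFeatureMap φ k)
    (he : ‖e‖ = 1) (hs : 0 < s) {a b : E} {C : ℝ} (h : ∀ z, ‖a - b‖ - s ≤ z → k z ≤ C) :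
    ⟪segmentMean φ e s a, segmentMean φ e s b⟫_ℝ ≤ C := by
  have := isProbabilityMeasure_uniformIoc hs
  refine inner_integral_le_of_ae_le_const (hφ.comp_line b he).integrable ?_
  filter_upwards [ae_mem_uniformIoc] with v hv
  rw [real_inner_comm]
  refine inner_integral_le_of_ae_le_const (hφ.comp_line a he).integrable ?_
  filter_upwards [ae_mem_uniformIoc] with u hu
  rw [hφ.inner_eq]
  refine h _ ?_
  calc ‖a - b‖ - s ≤ ‖a - b‖ - ‖(v - u) • e‖ := by
        rw [norm_smul, he, mul_one, Real.norm_eq_abs]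
        gcongr
        exact abs_le.2 ⟨by linarith [hv.1, hu.2], by linarith [hu.1, hv.2]⟩
    _ ≤ ‖(a - b) - (v - u) • e‖ := norm_sub_norm_le _ _
    _ = ‖b + v • e - (a + u • e)‖ := by rw [← norm_neg, sub_smul]; abel_nf

theorem norm_sq_integral_le_of_near_far {π : Measure ℝ} [IsProbabilityMeasure π] {σ g : ℝ → H}
    {c q w₁ w₂ A₁ A₂ : ℝ} (hσ : Integrable σ π) (hg : Integrable g π) (hA₁ : 0 ≤ A₁) (hA₂ : 0 ≤ A₂)
    (hq : 0 ≤ q) (hw₁ : 0 ≤ w₁) (hw₂ : 0 ≤ w₂)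
    (hball : ∀ x w, π (Metric.ball x w) ≤ ENNReal.ofReal (q * w))
    (h : ∀ᵐ t ∂π, ∀ᵐ u ∂π, ⟪σ t, σ u⟫_ℝ ≤ c * ⟪g t, g u⟫_ℝ +
      ((Metric.ball t w₁).indicator (fun _ => A₁) u +
        (Metric.ball t w₂).indicator (fun _ => A₂) u)) :
    ‖∫ t, σ t ∂π‖ ^ 2 ≤ c * ‖∫ t, g t ∂π‖ ^ 2 + (q * w₁ * A₁ + q * w₂ * A₂) := by
  have indicator_integrable (t w A : ℝ) :
      Integrable ((Metric.ball t w).indicator fun _ => A) π :=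
    (integrable_const A).indicator measurableSet_ball
  have indicator_le (t : ℝ) {w A : ℝ} (hw : 0 ≤ w) (hA : 0 ≤ A) :
      ∫ u, (Metric.ball t w).indicator (fun _ => A) u ∂π ≤ q * w * A := by
    rw [integral_indicator_const _ measurableSet_ball, smul_eq_mul]
    exact mul_le_mul_of_nonneg_right
      (ENNReal.toReal_le_of_le_ofReal (mul_nonneg hq hw) (hball t w)) hA
  refine norm_sq_integral_le_of_ae_inner_le hσ hg ?_
  filter_upwards [h] with t ht
  refine (inner_integral_le_of_ae_le hσ hg
    ((indicator_integrable t w₁ A₁).add (indicator_integrable t w₂ A₂)) ht).trans ?_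
  simp only [Pi.add_apply]
  grw [integral_add (indicator_integrable ..) (indicator_integrable ..), indicator_le t hw₁ hA₁,
    indicator_le t hw₂ hA₂]

theorem IsRadialFeatureMap.inner_segmentMean_le_near_far (hφ : IsRadialFeatureMap φ k)
    (he : ‖e‖ = 1) (hs : 0 < s) {C r₀ : ℝ} (hdec : AlmostDecreasingFrom k C r₀) {Λ w : ℝ}
    (hΛ : 0 ≤ Λ) {a b : E} {t u : ℝ}
    (far : w ≤ |t - u| → ∀ z, ‖a - b‖ - s ≤ z → k z ≤ Λ * k |t - u|) :
    ⟪segmentMean φ e s a, segmentMean φ e s b⟫_ℝ ≤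
      Λ * ⟪φ (t • e), φ (u • e)⟫_ℝ +
        ((Metric.ball t w).indicator (fun _ => 2 * absPrimitive k s / s) u +
          (Metric.ball t r₀).indicator (fun _ => Λ * k 0) u) := by
  have hψ := hφ.comp_smul he
  have average_le := hφ.inner_segmentMean_le he hs a b
  have profile_ge : -k 0 ≤ k |t - u| := (abs_le.1 (hψ.abs_profile_abs_le (t - u))).1
  have near_const_nonneg : 0 ≤ Λ * k 0 := mul_nonneg hΛ hφ.profile_zero_nonneg
  have indicator_nonneg (x w : ℝ) {A : ℝ} (hA : 0 ≤ A) (u : ℝ) :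
      0 ≤ (Metric.ball x w).indicator (fun _ => A) u := Set.indicator_nonneg (fun _ _ => hA) u
  have spread_nonneg : 0 ≤ 2 * absPrimitive k s / s := by
    have := absPrimitive_nonneg hψ.continuous_profile_abs hs.le
    positivity
  have inner_line : ⟪φ (t • e), φ (u • e)⟫_ℝ = k |t - u| := hψ.inner_eq t u
  rw [inner_line]
  rcases le_or_gt w |t - u| with hfar | hnear
  · grw [hφ.inner_segmentMean_le_of_forall_le he hs (far hfar)]
    linarith [indicator_nonneg t w spread_nonneg u, indicator_nonneg t r₀ near_const_nonneg u]
  · have mem_ball : u ∈ Metric.ball t w := by rwa [Metric.mem_ball', Real.dist_eq]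
    rw [Set.indicator_of_mem mem_ball]
    rcases le_or_gt r₀ |t - u| with hlarge | hsmall
    · have profile_nonneg := mul_nonneg hΛ (hdec.pos hlarge).le
      linarith [indicator_nonneg t r₀ near_const_nonneg u]
    · have mem_ball' : u ∈ Metric.ball t r₀ := by rwa [Metric.mem_ball', Real.dist_eq]
      rw [Set.indicator_of_mem mem_ball']
      linarith [mul_le_mul_of_nonneg_left profile_ge hΛ]

theorem IsRadialFeatureMap.norm_sq_integral_segmentSpread_le [MeasurableSpace E] [BorelSpace E]
    [SecondCountableTopology E] (hφ : IsRadialFeatureMap φ k) (he : ‖e‖ = 1) (hs : 0 < s)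
    {C r₀ : ℝ} (hdec : AlmostDecreasingFrom k C r₀) {Λ w q : ℝ} (hΛ : 0 ≤ Λ) (hw : 0 ≤ w)
    (hq : 0 ≤ q) {π : Measure ℝ} [IsProbabilityMeasure π]
    (hball : ∀ x w, π (Metric.ball x w) ≤ ENNReal.ofReal (q * w)) {p : ℝ → E} (hp : Measurable p)
    (far : ∀ᵐ t ∂π, ∀ᵐ u ∂π, w ≤ |t - u| → ∀ z, ‖p t - p u‖ - s ≤ z → k z ≤ Λ * k |t - u|) :
    ‖∫ x, φ x ∂segmentSpread π p e s‖ ^ 2 ≤ Λ * ‖∫ t, φ (t • e) ∂π‖ ^ 2 +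
      (q * w * (2 * absPrimitive k s / s) + q * r₀ * (Λ * k 0)) := by
  have hψ := hφ.comp_smul he
  have spread_nonneg : 0 ≤ 2 * absPrimitive k s / s := by
    have := absPrimitive_nonneg hψ.continuous_profile_abs hs.le
    positivity
  rw [hφ.integral_segmentSpread hp hs]
  refine norm_sq_integral_le_of_near_far (hφ.integrable_segmentMean hp hs) hψ.integrable
    spread_nonneg (mul_nonneg hΛ hφ.profile_zero_nonneg) hq hw hdec.threshold_pos.le hball ?_
  filter_upwards [far] with t ht
  filter_upwards [ht] with u hu
  exact hφ.inner_segmentMean_le_near_far he hs hdec hΛ hu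

end Transplant

section MinEnergy

/-- The minimal energy of a Borel probability measure on `D`, the reciprocal of the capacity. -/
noncomputable def minEnergy {d : ℕ} (K : EuclideanSpace ℝ (Fin d) → ℝ)
    (D : Set (EuclideanSpace ℝ (Fin d))) : ℝ :=
  sInf {e : ℝ | ∃ μ : Measure (EuclideanSpace ℝ (Fin d)),
    IsProbabilityMeasure μ ∧ μ Dᶜ = 0 ∧ e = energyE K μ}

variable {d : ℕ} {K : EuclideanSpace ℝ (Fin d) → ℝ} {D : Set (EuclideanSpace ℝ (Fin d))}

theorem capacityE_eq_inv_minEnergy : capacityE K D = (minEnergy K D)⁻¹ := rfl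

variable {k : ℝ → ℝ} {H : Type*} [NormedAddCommGroup H] [InnerProductSpace ℝ H] [CompleteSpace H]
  {φ : EuclideanSpace ℝ (Fin d) → H}

theorem energyE_eq_norm_sq (hφ : IsRadialFeatureMap φ k) (hrad : ∀ x, K x = k ‖x‖)
    (μ : Measure (EuclideanSpace ℝ (Fin d))) [IsProbabilityMeasure μ] :
    energyE K μ = ‖∫ x, φ x ∂μ‖ ^ 2 := by
  simp only [energyE, hrad, hφ.norm_sq_integral_eq]

theorem minEnergy_le_norm_sq (hφ : IsRadialFeatureMap φ k) (hrad : ∀ x, K x = k ‖x‖)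
    {μ : Measure (EuclideanSpace ℝ (Fin d))} [IsProbabilityMeasure μ] (hμ : ∀ᵐ x ∂μ, x ∈ D) :
    minEnergy K D ≤ ‖∫ x, φ x ∂μ‖ ^ 2 := by
  refine csInf_le ⟨0, ?_⟩ ⟨μ, inferInstance, hμ, (energyE_eq_norm_sq hφ hrad μ).symm⟩
  rintro _ ⟨ν, _, -, rfl⟩
  rw [energyE_eq_norm_sq hφ hrad]
  positivity

theorem le_minEnergy (hφ : IsRadialFeatureMap φ k) (hrad : ∀ x, K x = k ‖x‖) (hD : D.Nonempty)
    {b : ℝ} (h : ∀ μ : Measure (EuclideanSpace ℝ (Fin d)), IsProbabilityMeasure μ →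
      (∀ᵐ x ∂μ, x ∈ D) → b ≤ ‖∫ x, φ x ∂μ‖ ^ 2) : b ≤ minEnergy K D := by
  obtain ⟨a, ha⟩ := hD
  have dirac_mem : ∀ᵐ x ∂Measure.dirac a, x ∈ D := by simpa [ae_dirac_eq] using ha
  refine le_csInf ⟨_, Measure.dirac a, inferInstance, dirac_mem, rfl⟩ ?_
  rintro _ ⟨μ, hμ, hμD, rfl⟩
  rw [energyE_eq_norm_sq hφ hrad]
  exact h μ hμ hμD

theorem minEnergy_pos_of_isBounded (hφ : IsRadialFeatureMap φ k) (hrad : ∀ x, K x = k ‖x‖)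
    (hdec : ∃ r₀, AlmostDecreasingFrom k 2 r₀) (hJ : Tendsto (absPrimitive k) atTop atTop)
    {e : EuclideanSpace ℝ (Fin d)} (he : ‖e‖ = 1) (hD : D.Nonempty) (hb : Bornology.IsBounded D) :
    0 < minEnergy K D := by
  obtain ⟨r₀, hr₀⟩ := hdec
  obtain ⟨B, hB⟩ := hb.exists_norm_le
  obtain ⟨R, hR, hJR, hJB, hJr₀⟩ := ((eventually_ge_atTop (4 * r₀)).and
    ((hJ.eventually_gt_atTop 0).and ((hJ.eventually_ge_atTop (36 * absPrimitive k B)).and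
      (hJ.eventually_ge_atTop (288 * (k 0 * r₀)))))).exists
  have hR0 : 0 < R := by linarith [hr₀.threshold_pos]
  refine lt_of_lt_of_le (show 0 < absPrimitive k R / (2592 * R) by positivity)
    (le_minEnergy hφ hrad hD fun μ _ hμ => ?_)
  refine hφ.absPrimitive_div_le_norm_sq_of_tube hr₀ he hR hJB hJr₀ hJR ?_
  filter_upwards [hμ] with x hx
  exact ⟨0, Set.left_mem_Icc.2 hR0.le, by simpa using hB x hx⟩

end MinEnergy

section Line

variable {d : ℕ} {i : Fin d} {R : ℝ}

theorem lineEmbed_eq_image (hi : (i : ℕ) = 0) (S : Set ℝ) :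
    lineEmbed d S = (fun t : ℝ => t • EuclideanSpace.single i (1 : ℝ)) '' S := by
  have coord_zero_iff (j : Fin d) : (j : ℕ) = 0 ↔ j = i := by rw [Fin.ext_iff, hi]
  ext x
  simp only [lineEmbed, Set.mem_ofPred_eq, coord_zero_iff, Set.mem_image]
  constructor
  · intro h
    refine ⟨x i, by simpa using h i, PiLp.ext fun j => ?_⟩
    specialize h j
    by_cases hj : j = i <;> simp_all
  · rintro ⟨t, ht, rfl⟩ j
    split_ifs with hj <;> simp [hj, ht]

theorem isCompact_lineEmbed_Icc (hi : (i : ℕ) = 0) : IsCompact (lineEmbed d (Set.Icc 0 R)) := by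
  rw [lineEmbed_eq_image hi]
  exact isCompact_Icc.image (by fun_prop)

theorem lineEmbed_Icc_nonempty (hi : (i : ℕ) = 0) (hR : 0 ≤ R) :
    (lineEmbed d (Set.Icc 0 R)).Nonempty := by
  rw [lineEmbed_eq_image hi]
  exact (Set.nonempty_Icc.2 hR).image _

variable {K : EuclideanSpace ℝ (Fin d) → ℝ} {k : ℝ → ℝ} {H : Type*} [NormedAddCommGroup H]
  [InnerProductSpace ℝ H] [CompleteSpace H] {φ : EuclideanSpace ℝ (Fin d) → H}

theorem minEnergy_lineEmbed_Icc_le (hφ : IsRadialFeatureMap φ k) (hrad : ∀ x, K x = k ‖x‖)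
    (hi : (i : ℕ) = 0) (hR : 0 < R) :
    minEnergy K (lineEmbed d (Set.Icc 0 R)) ≤ 2 * absPrimitive k R / R := by
  have := isProbabilityMeasure_uniformIoc hR
  have hmeas : Measurable fun t : ℝ => t • EuclideanSpace.single i (1 : ℝ) := by fun_prop
  have := Measure.isProbabilityMeasure_map (μ := uniformIoc R) hmeas.aemeasurable
  have mem_line : ∀ᵐ x ∂(uniformIoc R).map fun t => t • EuclideanSpace.single i (1 : ℝ),
      x ∈ lineEmbed d (Set.Icc 0 R) := by
    refine (ae_map_iff hmeas.aemeasurable (isCompact_lineEmbed_Icc hi).measurableSet).2 ?_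
    filter_upwards [ae_mem_uniformIoc] with t ht
    exact (lineEmbed_eq_image hi _).ge ⟨t, Set.Ioc_subset_Icc_self ht, rfl⟩
  refine (minEnergy_le_norm_sq hφ hrad mem_line).trans ?_
  rw [integral_map hmeas.aemeasurable hφ.continuous.aestronglyMeasurable]
  exact (hφ.comp_smul (by simp)).norm_sq_integral_uniformIoc_le hR

theorem exists_diffuse_measure_of_ae_mem_lineEmbed (hφ : IsRadialFeatureMap φ k)
    (hi : (i : ℕ) = 0) {ℓ : ℝ} (hℓ : 0 < ℓ) {μ : Measure (EuclideanSpace ℝ (Fin d))}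
    [IsProbabilityMeasure μ] (hμ : ∀ᵐ x ∂μ, x ∈ lineEmbed d (Set.Icc 0 R)) :
    ∃ π : Measure ℝ, IsProbabilityMeasure π ∧ (∀ᵐ t ∂π, t ∈ Set.Icc 0 (R + ℓ)) ∧
      (∀ x w, π (Metric.ball x w) ≤ ENNReal.ofReal (2 / ℓ * w)) ∧
      ‖∫ t, φ (t • EuclideanSpace.single i 1) ∂π‖ ≤ ‖∫ x, φ x ∂μ‖ := by
  have := isProbabilityMeasure_uniformIoc hℓ
  have hcoord : Measurable fun x : EuclideanSpace ℝ (Fin d) => x i := by fun_prop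
  have := Measure.isProbabilityMeasure_map (μ := μ) hcoord.aemeasurable
  have hψ := hφ.comp_smul (e := EuclideanSpace.single i 1) (by simp)
  have on_line : ∀ᵐ x ∂μ, x i ∈ Set.Icc 0 R ∧ x i • EuclideanSpace.single i 1 = x := by
    filter_upwards [hμ] with x hx
    rw [lineEmbed_eq_image hi] at hx
    obtain ⟨t, ht, rfl⟩ := hx
    simpa using ht
  refine ⟨μ.map (fun x => x i) ∗ uniformIoc ℓ, inferInstance, ?_, ?_, ?_⟩
  · have mem_Icc : ∀ᵐ x ∂μ.map (fun x => x i), x ∈ Set.Icc 0 R :=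
      (ae_map_iff hcoord.aemeasurable measurableSet_Icc).2 (on_line.mono fun _ hx => hx.1)
    refine ae_conv_of_ae_ae measurableSet_Icc ?_
    filter_upwards [mem_Icc] with x hx
    filter_upwards [ae_mem_uniformIoc] with v hv
    exact ⟨add_nonneg hx.1 hv.1.le, add_le_add hx.2 hv.2⟩
  · intro x w
    refine conv_ball_le (fun y => ?_) x
    rw [div_mul_eq_mul_div]
    exact uniformIoc_ball_le hℓ y w
  · refine (hψ.norm_integral_conv_le _ _).trans_eq ?_
    rw [integral_map hcoord.aemeasurable hψ.continuous.aestronglyMeasurable]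
    exact congrArg norm (integral_congr_ae (on_line.mono fun x hx => congrArg φ hx.2))

theorem minEnergy_iUnion_closedBall_le_norm_sq (hφ : IsRadialFeatureMap φ k)
    (hrad : ∀ x, K x = k ‖x‖) (i : Fin d) {C r₀ : ℝ} (hdec : AlmostDecreasingFrom k C r₀)
    {n : ℕ} {c : Fin n → EuclideanSpace ℝ (Fin d)} {r s l N Λ w q : ℝ} (hr : 0 < r) (hs : 0 < s)
    (hl : 0 < l) (hN : l * N / r < n)
    (hsep : ∀ i j : Fin n, |(i : ℝ) - (j : ℝ)| * r ≤ ‖c i - c j‖) (hΛ : 0 ≤ Λ) (hw : 0 ≤ w)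
    (hfar : ∀ τ, w ≤ τ → ∀ z, l * τ - r - s ≤ z → k z ≤ Λ * k τ) (hq : 0 ≤ q) {π : Measure ℝ}
    [IsProbabilityMeasure π] (hπ : ∀ᵐ t ∂π, t ∈ Set.Icc 0 N)
    (hball : ∀ x w, π (Metric.ball x w) ≤ ENNReal.ofReal (q * w)) :
    minEnergy K (⋃ j, Metric.closedBall (c j) s) ≤
      Λ * ‖∫ t, φ (t • EuclideanSpace.single i 1) ∂π‖ ^ 2 +
        (q * w * (2 * absPrimitive k s / s) + q * r₀ * (Λ * k 0)) := by
  have he : ‖EuclideanSpace.single i (1 : ℝ)‖ = 1 := by simp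
  obtain ⟨p, hp, hpc, hpsep⟩ := exists_measurable_placement hr hl hN hsep
  have := isProbabilityMeasure_segmentSpread (π := π) (e := EuclideanSpace.single i 1) hp hs
  have mem_balls := ae_segmentSpread_mem (π := π) (D := ⋃ j, Metric.closedBall (c j) s) hp hs he
    (.iUnion fun _ => measurableSet_closedBall) <| by
      filter_upwards [hπ] with t ht
      obtain ⟨j, hj⟩ := hpc t ht
      exact hj ▸ Set.subset_iUnion (fun j => Metric.closedBall (c j) s) j
  refine (minEnergy_le_norm_sq hφ hrad mem_balls).trans
    (hφ.norm_sq_integral_segmentSpread_le he hs hdec hΛ hw hq hball hp ?_)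
  filter_upwards [hπ] with t ht
  filter_upwards [hπ] with u hu hw z hz
  exact hfar _ hw z (by linarith [hpsep t ht u hu])

theorem minEnergy_iUnion_closedBall_le (hφ : IsRadialFeatureMap φ k)
    (hrad : ∀ x, K x = k ‖x‖) (hi : (i : ℕ) = 0) {C r₀ : ℝ} (hdec : AlmostDecreasingFrom k C r₀)
    {n : ℕ} {c : Fin n → EuclideanSpace ℝ (Fin d)} {r s l ℓ Λ w : ℝ} (hr : 0 < r) (hs : 0 < s)
    (hl : 0 < l) (hR : 0 ≤ R) (hℓ : 0 < ℓ) (hn : l * (R + ℓ) / r < n)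
    (hsep : ∀ i j : Fin n, |(i : ℝ) - (j : ℝ)| * r ≤ ‖c i - c j‖) (hΛ : 0 < Λ) (hw : 0 ≤ w)
    (hfar : ∀ τ, w ≤ τ → ∀ z, l * τ - r - s ≤ z → k z ≤ Λ * k τ) :
    minEnergy K (⋃ j, Metric.closedBall (c j) s) ≤
      Λ * minEnergy K (lineEmbed d (Set.Icc 0 R)) +
        (2 / ℓ * w * (2 * absPrimitive k s / s) + 2 / ℓ * r₀ * (Λ * k 0)) := by
  rw [← sub_le_iff_le_add, ← div_le_iff₀' hΛ]
  refine le_minEnergy hφ hrad (lineEmbed_Icc_nonempty hi hR) fun μ _ hμ => ?_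
  obtain ⟨π, _, hπ, hball, hle⟩ := exists_diffuse_measure_of_ae_mem_lineEmbed hφ hi hℓ hμ
  rw [div_le_iff₀' hΛ, sub_le_iff_le_add]
  refine (minEnergy_iUnion_closedBall_le_norm_sq hφ hrad i hdec hr hs hl hn hsep hΛ.le hw hfar
    (by positivity) hπ hball).trans ?_
  gcongr

end Line

section Scales

/-- Scales `s R ≤ r R ≪ R` for which the self-energy `absPrimitive k (s R) / s R` of the balls,
averaged over about `R / r R` of them, is negligible against the energy of `[0, R]`. -/
structure IsNegligibleScale (k r s : ℝ → ℝ) : Prop where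
  tendsto : Tendsto s atTop atTop
  le : ∀ᶠ R in atTop, s R ≤ r R
  isLittleO_id : r =o[atTop] fun R => R
  isLittleO_absPrimitive :
    (fun R => r R / s R * absPrimitive k (s R)) =o[atTop] absPrimitive k

variable {k r s : ℝ → ℝ}

theorem IsNegligibleScale.of_isTheta {w : ℝ → ℝ} (hw : absPrimitive k =Θ[atTop] w)
    (hs : Tendsto s atTop atTop) (hsr : ∀ᶠ R in atTop, s R ≤ r R)
    (hr : r =o[atTop] fun R => R)
    (h : (fun R => r R / s R * w (s R)) =o[atTop] w) : IsNegligibleScale k r s where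
  tendsto := hs
  le := hsr
  isLittleO_id := hr
  isLittleO_absPrimitive :=
    ((isBigO_refl _ _).mul (hw.1.comp_tendsto hs)).trans_isLittleO h |>.trans_isBigO hw.2

namespace IsNegligibleScale

theorem tendsto_spacing (h : IsNegligibleScale k r s) : Tendsto r atTop atTop :=
  tendsto_atTop_mono' _ h.le h.tendsto

theorem eventually_lt_floor (h : IsNegligibleScale k r s) {ρ₀ ρ : ℝ} (hρ : ρ₀ < ρ) :
    ∀ᶠ R in atTop, ρ₀ * R / r R < ⌊ρ * R / r R⌋₊ := by
  filter_upwards [h.isLittleO_id.def (sub_pos.2 hρ), h.tendsto_spacing.eventually_gt_atTop 0,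
    eventually_gt_atTop 0] with R hle hr hR
  rw [Real.norm_of_nonneg hr.le, Real.norm_of_nonneg hR.le] at hle
  have gap : ρ₀ * R / r R + 1 ≤ ρ * R / r R := by
    rw [div_add_one hr.ne']
    gcongr
    linarith
  linarith [Nat.lt_floor_add_one (ρ * R / r R)]

theorem eventually_error_le (h : IsNegligibleScale k r s)
    (hJ : Tendsto (absPrimitive k) atTop atTop) (A B : ℝ) {δ : ℝ} (hδ : 0 < δ) :
    ∀ᶠ R in atTop, A * (r R / s R * absPrimitive k (s R)) + B ≤ δ * absPrimitive k R := by
  have error_isLittleO := (h.isLittleO_absPrimitive.const_mul_left A).add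
    (isLittleO_const_left.2 (.inr (tendsto_norm_atTop_atTop.comp hJ)) :
      (fun _ => B) =o[atTop] absPrimitive k)
  filter_upwards [error_isLittleO.def hδ, hJ.eventually_ge_atTop 0] with R hle hJR
  rw [Real.norm_of_nonneg hJR] at hle
  exact (le_abs_self _).trans hle

theorem eventually_absPrimitive_le (h : IsNegligibleScale k r s)
    (hJ : Tendsto (absPrimitive k) atTop atTop) {δ : ℝ} (hδ : 0 < δ) :
    ∀ᶠ R in atTop, absPrimitive k (s R) ≤ δ * absPrimitive k R := by
  filter_upwards [h.eventually_error_le hJ 1 0 hδ, h.tendsto.eventually_gt_atTop 0, h.le,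
    (hJ.comp h.tendsto).eventually_ge_atTop 0] with R hle hs hsr hJs
  rw [one_mul, add_zero] at hle
  exact (le_mul_of_one_le_left hJs ((one_le_div₀ hs).2 hsr)).trans hle

end IsNegligibleScale

end Scales

section Comparison

variable {d : ℕ} {i : Fin d} {K : EuclideanSpace ℝ (Fin d) → ℝ} {k r s : ℝ → ℝ} {H : Type*}
  [NormedAddCommGroup H] [InnerProductSpace ℝ H] [CompleteSpace H]
  {φ : EuclideanSpace ℝ (Fin d) → H}

theorem eventually_absPrimitive_div_le_minEnergy_of_tube (hφ : IsRadialFeatureMap φ k)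
    (hrad : ∀ x, K x = k ‖x‖) (hdec : ∃ r₀, AlmostDecreasingFrom k 2 r₀)
    (hJ : Tendsto (absPrimitive k) atTop atTop) (hscale : IsNegligibleScale k r s)
    {e : EuclideanSpace ℝ (Fin d)} (he : ‖e‖ = 1) :
    ∀ᶠ R in atTop, ∀ D : Set (EuclideanSpace ℝ (Fin d)), D.Nonempty →
      (∀ x ∈ D, ∃ p ∈ Set.Icc 0 R, ‖x - p • e‖ ≤ s R) →
      absPrimitive k R / (2592 * R) ≤ minEnergy K D := by
  obtain ⟨r₀, hr₀⟩ := hdec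
  filter_upwards [eventually_ge_atTop (4 * r₀), hJ.eventually_ge_atTop (288 * (k 0 * r₀)),
    hJ.eventually_gt_atTop 0, hscale.eventually_absPrimitive_le hJ (show (0 : ℝ) < 1 / 36 by simp)]
    with R hR hJr₀ hJ0 hJs D hD htube
  exact le_minEnergy hφ hrad hD fun μ _ hμ =>
    hφ.absPrimitive_div_le_norm_sq_of_tube hr₀ he hR (by linarith) hJr₀ hJ0 (hμ.mono htube)

theorem eventually_absPrimitive_div_le_minEnergy_lineEmbed (hφ : IsRadialFeatureMap φ k)
    (hrad : ∀ x, K x = k ‖x‖) (hi : (i : ℕ) = 0) (hdec : ∃ r₀, AlmostDecreasingFrom k 2 r₀)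
    (hJ : Tendsto (absPrimitive k) atTop atTop) (hscale : IsNegligibleScale k r s) :
    ∀ᶠ R in atTop, absPrimitive k R / (2592 * R) ≤ minEnergy K (lineEmbed d (Set.Icc 0 R)) := by
  filter_upwards [eventually_absPrimitive_div_le_minEnergy_of_tube hφ hrad hdec hJ hscale
    (e := EuclideanSpace.single i 1) (by simp), eventually_ge_atTop 0,
    hscale.tendsto.eventually_ge_atTop 0] with R htube hR hs
  refine htube _ (lineEmbed_Icc_nonempty hi hR) fun x hx => ?_
  obtain ⟨p, hp, rfl⟩ := (lineEmbed_eq_image hi _).le hx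
  exact ⟨p, hp, by simpa using hs⟩

theorem exists_eventually_minEnergy_iUnion_closedBall_le_add (hφ : IsRadialFeatureMap φ k)
    (hrad : ∀ x, K x = k ‖x‖) (hi : (i : ℕ) = 0) {C r₀ : ℝ} (hdec : AlmostDecreasingFrom k C r₀)
    (hscale : IsNegligibleScale k r s) {θ l ρ₀ Λ : ℝ} (hl : 0 < l) (hθl : θ < l) (hlρ : l < ρ₀)
    (hΛ : 0 < Λ) (hfar : ∀ᶠ τ in atTop, ∀ z, θ * τ ≤ z → k z ≤ Λ * k τ) :
    ∃ A B : ℝ, ∀ᶠ R in atTop, ∀ (n : ℕ) (c : Fin n → EuclideanSpace ℝ (Fin d)),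
      ρ₀ * R / r R < n → (∀ i j : Fin n, |(i : ℝ) - (j : ℝ)| * r R ≤ ‖c i - c j‖) →
      minEnergy K (⋃ j, Metric.closedBall (c j) (s R)) ≤
        Λ * minEnergy K (lineEmbed d (Set.Icc 0 R)) +
          (A * (r R / s R * absPrimitive k (s R)) + B) / R := by
  obtain ⟨X, hX⟩ := eventually_atTop.1 hfar
  have hgap : 0 < l - θ := sub_pos.2 hθl
  set a := ρ₀ / l - 1 with ha_def
  have ha : 0 < a := by rwa [ha_def, sub_pos, one_lt_div hl]
  refine ⟨8 / (a * (l - θ)), 2 / a * r₀ * (Λ * k 0), ?_⟩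
  filter_upwards [hscale.tendsto_spacing.eventually_gt_atTop 0,
    hscale.tendsto_spacing.eventually_ge_atTop (X * (l - θ) / 2),
    hscale.tendsto.eventually_gt_atTop 0, hscale.le, eventually_gt_atTop 0] with
    R hr hrX hs hsr hR n c hn hsep
  have far (τ : ℝ) (hτ : 2 * r R / (l - θ) ≤ τ) (z : ℝ) (hz : l * τ - r R - s R ≤ z) :
      k z ≤ Λ * k τ := by
    have X_le : X ≤ 2 * r R / (l - θ) := (le_div_iff₀ hgap).2 (by linarith)
    have spacing_le := (div_le_iff₀' hgap).1 hτ
    exact hX τ (X_le.trans hτ) z (by linarith)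
  have count : l * (R + a * R) / r R < n := by
    rwa [ha_def, show l * (R + (ρ₀ / l - 1) * R) = ρ₀ * R by field_simp; ring]
  refine (minEnergy_iUnion_closedBall_le hφ hrad hi hdec hr hs hl hR.le (mul_pos ha hR) count hsep
    hΛ (by positivity) far).trans_eq ?_
  field_simp
  ring

theorem exists_eventually_minEnergy_iUnion_closedBall_le (hφ : IsRadialFeatureMap φ k)
    (hrad : ∀ x, K x = k ‖x‖) (hi : (i : ℕ) = 0) {α : ℝ} (hrv : RegularlyVarying k α)
    (hdec : ∀ C, 1 < C → ∃ r₀, AlmostDecreasingFrom k C r₀)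
    (hJ : Tendsto (absPrimitive k) atTop atTop) (hscale : IsNegligibleScale k r s) {ε : ℝ}
    (hε : 0 < ε) : ∃ ρ₀, 0 < ρ₀ ∧ ρ₀ < 1 ∧ ∀ᶠ R in atTop,
      ∀ (n : ℕ) (c : Fin n → EuclideanSpace ℝ (Fin d)), ρ₀ * R / r R < n →
        (∀ i j : Fin n, |(i : ℝ) - (j : ℝ)| * r R ≤ ‖c i - c j‖) →
        minEnergy K (⋃ j, Metric.closedBall (c j) (s R)) ≤
          (1 + ε) * minEnergy K (lineEmbed d (Set.Icc 0 R)) := by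
  obtain ⟨θ, hθ0, hθ1, hθ⟩ := hrv.exists_eventually_le_mul hdec (C := 1 + ε / 2) (by linarith)
  obtain ⟨r₀, hr₀⟩ := hdec 2 one_lt_two
  obtain ⟨l, hθl, hl1⟩ := exists_between hθ1
  obtain ⟨ρ₀, hlρ, hρ1⟩ := exists_between hl1
  have hl : 0 < l := hθ0.trans hθl
  obtain ⟨A, B, hAB⟩ := exists_eventually_minEnergy_iUnion_closedBall_le_add hφ hrad hi hr₀ hscale
    hl hθl hlρ (by positivity) hθ
  refine ⟨ρ₀, hl.trans hlρ, hρ1, ?_⟩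
  filter_upwards [hAB, hscale.eventually_error_le hJ A B (show 0 < ε / 2 / 2592 by positivity),
    eventually_absPrimitive_div_le_minEnergy_lineEmbed hφ hrad hi ⟨r₀, hr₀⟩ hJ hscale,
    eventually_gt_atTop 0] with R hle herror hline hR n c hn hsep
  calc minEnergy K (⋃ j, Metric.closedBall (c j) (s R))
    _ ≤ (1 + ε / 2) * minEnergy K (lineEmbed d (Set.Icc 0 R)) +
        (A * (r R / s R * absPrimitive k (s R)) + B) / R := hle n c hn hsep
    _ ≤ (1 + ε / 2) * minEnergy K (lineEmbed d (Set.Icc 0 R)) +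
        ε / 2 / 2592 * absPrimitive k R / R := by gcongr
    _ = (1 + ε / 2) * minEnergy K (lineEmbed d (Set.Icc 0 R)) +
        ε / 2 * (absPrimitive k R / (2592 * R)) := by ring
    _ ≤ (1 + ε / 2) * minEnergy K (lineEmbed d (Set.Icc 0 R)) +
        ε / 2 * minEnergy K (lineEmbed d (Set.Icc 0 R)) := by gcongr
    _ = (1 + ε) * minEnergy K (lineEmbed d (Set.Icc 0 R)) := by ring

end Comparison

section CapacityRatios

/-- The quotients `Cap_K(⋃ i, D i) / Cap_K([0, R] × {0}^{d-1})` over the collections of at least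
`m` balls of radius `s` whose `i`-th and `j`-th centres are at distance at least `|i - j| * r`. -/
def capacityRatios {d : ℕ} (K : EuclideanSpace ℝ (Fin d) → ℝ) (R : ℝ) (m : ℕ) (r s : ℝ) : Set ℝ :=
  {q | ∃ (n : ℕ) (c : Fin n → EuclideanSpace ℝ (Fin d)), m ≤ n ∧
    (∀ i j : Fin n, |(i : ℝ) - (j : ℝ)| * r ≤ ‖c i - c j‖) ∧
    q = capacityE K (⋃ i, Metric.closedBall (c i) s) / capacityE K (lineEmbed d (Set.Icc 0 R))}

variable {d : ℕ} {i : Fin d} {K : EuclideanSpace ℝ (Fin d) → ℝ} {k r s : ℝ → ℝ} {H : Type*}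
  [NormedAddCommGroup H] [InnerProductSpace ℝ H] [CompleteSpace H]
  {φ : EuclideanSpace ℝ (Fin d) → H}

theorem capacityE_div_capacityE (D D' : Set (EuclideanSpace ℝ (Fin d))) :
    capacityE K D / capacityE K D' = minEnergy K D' / minEnergy K D := by
  rw [capacityE_eq_inv_minEnergy, capacityE_eq_inv_minEnergy, inv_div_inv]

theorem exists_forall_eventually_one_sub_le_of_mem_capacityRatios (hφ : IsRadialFeatureMap φ k)
    (hrad : ∀ x, K x = k ‖x‖) (hi : (i : ℕ) = 0) {α : ℝ} (hrv : RegularlyVarying k α)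
    (hdec : ∀ C, 1 < C → ∃ r₀, AlmostDecreasingFrom k C r₀)
    (hJ : Tendsto (absPrimitive k) atTop atTop) (hscale : IsNegligibleScale k r s) {ε : ℝ}
    (hε : 0 < ε) : ∃ ρ₀, 0 < ρ₀ ∧ ρ₀ < 1 ∧ ∀ ρ, ρ₀ < ρ → ∀ᶠ R in atTop,
      ∀ q ∈ capacityRatios K R ⌊ρ * R / r R⌋₊ (r R) (s R), 1 - ε ≤ q := by
  obtain ⟨ρ₀, hρ₀, hρ₀1, hle⟩ :=
    exists_eventually_minEnergy_iUnion_closedBall_le hφ hrad hi hrv hdec hJ hscale hε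
  refine ⟨ρ₀, hρ₀, hρ₀1, fun ρ hρ => ?_⟩
  filter_upwards [hle, hscale.eventually_lt_floor hρ, hscale.tendsto_spacing.eventually_ge_atTop 0,
    hscale.tendsto.eventually_ge_atTop 0, eventually_ge_atTop 0] with R hle hfloor hr hs hR
  rintro _ ⟨n, c, hn, hsep, rfl⟩
  have count : ρ₀ * R / r R < n := hfloor.trans_le (Nat.cast_le.2 hn)
  have hn0 : 0 < n := Nat.cast_pos.1 (count.trans_le' (by positivity))
  have union_pos : 0 < minEnergy K (⋃ j, Metric.closedBall (c j) (s R)) :=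
    minEnergy_pos_of_isBounded hφ hrad (hdec 2 one_lt_two) hJ (e := EuclideanSpace.single i 1)
      (by simp) ⟨c ⟨0, hn0⟩, Set.mem_iUnion.2 ⟨_, Metric.mem_closedBall_self hs⟩⟩
      (Bornology.isBounded_iUnion.2 fun _ => Metric.isBounded_closedBall)
  calc 1 - ε
    _ ≤ (1 + ε)⁻¹ := by
      rw [← one_div, le_div_iff₀ (by positivity)]
      nlinarith
    _ ≤ _ := by
      rw [capacityE_div_capacityE, le_div_iff₀ union_pos, inv_mul_le_iff₀ (by positivity)]
      exact hle n c count hsep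

theorem eventually_exists_mem_capacityRatios_le (hφ : IsRadialFeatureMap φ k)
    (hrad : ∀ x, K x = k ‖x‖) (hi : (i : ℕ) = 0) (hdec : ∃ r₀, AlmostDecreasingFrom k 2 r₀)
    (hJ : Tendsto (absPrimitive k) atTop atTop) (hscale : IsNegligibleScale k r s) {ρ : ℝ}
    (hρ0 : 0 < ρ) (hρ1 : ρ ≤ 1) :
    ∀ᶠ R in atTop, ∃ q ∈ capacityRatios K R ⌊ρ * R / r R⌋₊ (r R) (s R), q ≤ 5184 := by
  set e : EuclideanSpace ℝ (Fin d) := EuclideanSpace.single i 1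
  have he : ‖e‖ = 1 := by simp [e]
  filter_upwards [eventually_absPrimitive_div_le_minEnergy_of_tube hφ hrad hdec hJ hscale he,
    hscale.eventually_lt_floor hρ0, hscale.tendsto_spacing.eventually_gt_atTop 0,
    hscale.tendsto.eventually_ge_atTop 0, hJ.eventually_gt_atTop 0, eventually_gt_atTop 0] with
    R htube hfloor hr hs hJR hR
  set n := ⌊ρ * R / r R⌋₊
  have hn : 0 < n := by simpa using hfloor
  let c (j : Fin n) : EuclideanSpace ℝ (Fin d) := (j * r R) • e
  have sep (j j' : Fin n) : |(j : ℝ) - (j' : ℝ)| * r R ≤ ‖c j - c j'‖ := by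
    rw [← sub_smul, ← sub_mul, norm_smul, he, mul_one, norm_mul, Real.norm_eq_abs,
      Real.norm_of_nonneg hr.le]
  have center_le (j : Fin n) : j * r R ≤ R := by
    have hj : (j : ℝ) ≤ ρ * R / r R :=
      (Nat.cast_le.2 j.is_lt.le).trans (Nat.floor_le (by positivity))
    exact ((le_div_iff₀ hr).1 hj).trans (mul_le_of_le_one_left hR.le hρ1)
  have union_ge := htube (⋃ j, Metric.closedBall (c j) (s R))
    ⟨c ⟨0, hn⟩, Set.mem_iUnion.2 ⟨_, Metric.mem_closedBall_self hs⟩⟩ fun x hx => by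
      obtain ⟨j, hj⟩ := Set.mem_iUnion.1 hx
      exact ⟨j * r R, ⟨by positivity, center_le j⟩, mem_closedBall_iff_norm.1 hj⟩
  refine ⟨_, ⟨n, c, le_rfl, sep, rfl⟩, ?_⟩
  rw [capacityE_div_capacityE, div_le_iff₀ (lt_of_lt_of_le (by positivity) union_ge)]
  calc minEnergy K (lineEmbed d (Set.Icc 0 R))
    _ ≤ 2 * absPrimitive k R / R := minEnergy_lineEmbed_Icc_le hφ hrad hi hR
    _ = 5184 * (absPrimitive k R / (2592 * R)) := by ring
    _ ≤ _ := by gcongr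

theorem exists_forall_one_sub_le_liminf_sInf_capacityRatios (hφ : IsRadialFeatureMap φ k)
    (hrad : ∀ x, K x = k ‖x‖) (hi : (i : ℕ) = 0) {α : ℝ} (hrv : RegularlyVarying k α)
    (hdec : ∀ C, 1 < C → ∃ r₀, AlmostDecreasingFrom k C r₀)
    (hJ : Tendsto (absPrimitive k) atTop atTop) (hscale : IsNegligibleScale k r s) {ε : ℝ}
    (hε : 0 < ε) : ∃ ρ₀, 0 < ρ₀ ∧ ρ₀ < 1 ∧ ∀ ρ, ρ₀ < ρ → ρ < 1 →
      1 - ε ≤ liminf (fun R => sInf (capacityRatios K R ⌊ρ * R / r R⌋₊ (r R) (s R))) atTop := by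
  obtain ⟨ρ₀, hρ₀, hρ₀1, hlower⟩ :=
    exists_forall_eventually_one_sub_le_of_mem_capacityRatios hφ hrad hi hrv hdec hJ hscale hε
  refine ⟨ρ₀, hρ₀, hρ₀1, fun ρ hρ hρ1 => ?_⟩
  have lower := hlower ρ hρ
  have upper := eventually_exists_mem_capacityRatios_le hφ hrad hi (hdec 2 one_lt_two) hJ hscale
    (hρ₀.trans hρ) hρ1.le
  refine le_liminf_of_le (IsCoboundedUnder.of_frequently_le (a := 5184) ?_) ?_
  · refine (lower.and upper).frequently.mono fun R => ?_
    rintro ⟨hge, q, hq, hle⟩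
    exact (csInf_le ⟨1 - ε, hge⟩ hq).trans hle
  · filter_upwards [lower, upper] with R hge hne
    exact le_csInf (hne.imp fun _ hq => hq.1) hge

end CapacityRatios

section RegimeOfIndex

variable {k r s : ℝ → ℝ} {α : ℝ}

theorem tendsto_absPrimitive_and_isNegligibleScale_of_index_lt_one
    (hk : Continuous fun t => k |t|) (hdec : ∃ r₀, AlmostDecreasingFrom k 2 r₀)
    (hrv : RegularlyVarying k α) (hα : α < 1) (hs : Tendsto s atTop atTop)
    (hsr : ∀ᶠ R in atTop, s R ≤ r R) (hr : r =o[atTop] fun R => R)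
    (h : (fun R => r R * k (s R)) =o[atTop] fun R => R * k R) :
    Tendsto (absPrimitive k) atTop atTop ∧ IsNegligibleScale k r s := by
  obtain ⟨r₀, hr₀⟩ := hdec
  obtain ⟨hJ, hw⟩ := tendsto_absPrimitive_and_isTheta_of_index_lt_one hk hr₀ two_pos hrv hα
  refine ⟨hJ, .of_isTheta hw hs hsr hr (h.congr' ?_ .rfl)⟩
  filter_upwards [hs.eventually_ne_atTop 0] with R hsR
  field_simp

theorem tendsto_absPrimitive_and_isNegligibleScale_of_critical {γ : ℝ}
    (hk : Continuous fun t => k |t|) (hγ : γ < 1)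
    (hlim : Tendsto (fun x => k x / (x⁻¹ * Real.log x ^ (-γ))) atTop (nhds 1))
    (hs : Tendsto s atTop atTop) (hsr : ∀ᶠ R in atTop, s R ≤ r R) (hr : r =o[atTop] fun R => R)
    (h : (fun R => r R * k (s R) * Real.log (s R)) =o[atTop] fun R => R * k R * Real.log R) :
    Tendsto (absPrimitive k) atTop atTop ∧ IsNegligibleScale k r s := by
  obtain ⟨hJ, hw⟩ := tendsto_absPrimitive_and_isTheta_of_isEquivalent_inv_mul_log hk hγ
    (isEquivalent_of_tendsto_one hlim)
  refine ⟨hJ, .of_isTheta hw hs hsr hr (h.congr' ?_ .rfl)⟩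
  filter_upwards [hs.eventually_ne_atTop 0] with R hsR
  field_simp

end RegimeOfIndex

theorem statement13_general {d : ℕ} (hd : 0 < d) {K : EuclideanSpace ℝ (Fin d) → ℝ} {k : ℝ → ℝ}
    (hcont : Continuous K) (hrad : ∀ x, K x = k ‖x‖) (hpd : IsPosDefKernel K)
    {α : ℝ} (hα1 : α ≤ 1) (hrv : RegularlyVarying k α)
    (hcrit : α = 1 → ∃ γ : ℝ, γ < 1 ∧
      Tendsto (fun x => k x / (x⁻¹ * Real.log x ^ (-γ))) atTop (nhds 1))
    (hratio : ∀ ε : ℝ, 0 < ε → ∃ r₀ : ℝ, ∀ x y : ℝ, r₀ ≤ x → x ≤ y → k y / k x - 1 ≤ ε)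
    {r s : ℝ → ℝ} (hs : Tendsto s atTop atTop) (hsr : ∀ᶠ R in atTop, s R ≤ r R)
    (hr : r =o[atTop] fun R => R)
    (hcase0 : α < 1 → (fun R => r R * k (s R)) =o[atTop] fun R => R * k R)
    (hcase1 : α = 1 →
      (fun R => r R * k (s R) * Real.log (s R)) =o[atTop] fun R => R * k R * Real.log R)
    (ε : ℝ) (hε : 0 < ε) :
    ∃ ρ₀, 0 < ρ₀ ∧ ρ₀ < 1 ∧ ∀ ρ, ρ₀ < ρ → ρ < 1 →
      1 - ε ≤ liminf (fun R => sInf (capacityRatios K R ⌊ρ * R / r R⌋₊ (r R) (s R))) atTop := by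
  obtain ⟨H, _, _, _, φ, hφ⟩ := hpd.exists_isRadialFeatureMap hcont hrad
  have hk : Continuous fun t => k |t| :=
    (hφ.comp_smul (e := EuclideanSpace.single ⟨0, hd⟩ 1) (by simp)).continuous_profile_abs
  have hdec (C : ℝ) (hC : 1 < C) : ∃ r₀, AlmostDecreasingFrom k C r₀ :=
    exists_almostDecreasingFrom hrv.eventually_pos hratio hC
  obtain ⟨hJ, hscale⟩ : Tendsto (absPrimitive k) atTop atTop ∧ IsNegligibleScale k r s := by
    rcases hα1.lt_or_eq with hα | hα
    · exact tendsto_absPrimitive_and_isNegligibleScale_of_index_lt_one hk (hdec 2 one_lt_two) hrv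
        hα hs hsr hr (hcase0 hα)
    · obtain ⟨γ, hγ, hlim⟩ := hcrit hα
      exact tendsto_absPrimitive_and_isNegligibleScale_of_critical hk hγ hlim hs hsr hr (hcase1 hα)
  exact exists_forall_one_sub_le_liminf_sInf_capacityRatios (i := ⟨0, hd⟩) hφ hrad rfl hrv hdec hJ
    hscale hε

/-- under the stated conditions, for every `ε > 0` there is `ρ₀ ∈ (0,1)` such
that for every `ρ ∈ (ρ₀,1)`, the liminf as `R → ∞` of the infimum over admissible
collections of balls of `Cap_K(∪ᵢ Dᵢ) / Cap_K([0,R] × {0}^{d-1})` is at least `1 - ε`. -/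
theorem statement13 (d : ℕ) (hd : 2 ≤ d)
    (K : EuclideanSpace ℝ (Fin d) → ℝ) (k : ℝ → ℝ)
    (hcont : Continuous K) (hrad : ∀ x, K x = k ‖x‖) (hpd : IsPosDefKernel K)
    (α : ℝ) (hα0 : 0 ≤ α) (hα1 : α ≤ 1) (hrv : RegularlyVarying k α)
    (hcrit : α = 1 → ∃ γ : ℝ, γ < 1 ∧
      Tendsto (fun x => k x / (x⁻¹ * Real.log x ^ (-γ))) atTop (nhds 1))
    (hratio : ∀ ε : ℝ, 0 < ε → ∃ r₀ : ℝ, ∀ x y : ℝ, r₀ ≤ x → x ≤ y →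
      k y / k x - 1 ≤ ε)
    (r s : ℝ → ℝ) (hr : Tendsto r atTop atTop) (hs : Tendsto s atTop atTop)
    (hsr : ∀ R : ℝ, 0 < R → s R ≤ r R ∧ r R ≤ R)
    (hcase0 : α < 1 →
      ((fun R => r R) =o[atTop] (fun R : ℝ => R)) ∧
      ((fun R => r R * k (s R)) =o[atTop] (fun R => R * k R)))
    (hcase1 : α = 1 →
      (Tendsto (fun R => Real.log (max (r R) 2) / Real.log R) atTop (nhds 0)) ∧
      ((fun R => r R * k (s R) * Real.log (s R)) =o[atTop]
        (fun R => R * k R * Real.log R))) :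
    ∀ ε : ℝ, 0 < ε → ∃ ρ₀ : ℝ, 0 < ρ₀ ∧ ρ₀ < 1 ∧ ∀ ρ : ℝ, ρ₀ < ρ → ρ < 1 →
      1 - ε ≤ Filter.liminf (fun R =>
        sInf {q : ℝ | ∃ (n : ℕ) (c : Fin n → EuclideanSpace ℝ (Fin d)),
          Nat.floor (ρ * R / r R) ≤ n ∧
          (∀ i j : Fin n, |(i : ℝ) - (j : ℝ)| * r R ≤ ‖c i - c j‖) ∧
          q = capacityE K (⋃ i : Fin n, Metric.closedBall (c i) (s R)) /
                capacityE K (lineEmbed d (Set.Icc 0 R))}) atTop := by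
  have r_isLittleO : r =o[atTop] fun R => R := hα1.lt_or_eq.elim (fun hα => (hcase0 hα).1) fun hα =>
    isLittleO_id_of_tendsto_log_max_div_log (hr.eventually_ge_atTop 0) (hcase1 hα).1
  exact statement13_general (by lia) hcont hrad hpd hα1 hrv hcrit hratio hs
    ((eventually_gt_atTop 0).mono fun R hR => (hsr R hR).1) r_isLittleO
    (fun hα => (hcase0 hα).2) fun hα => (hcase1 hα).2
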